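/- For every real k ≠ 0, as τ → 0+, exp(−k·u*_τ(k)/√τ + Λ_τ(u*_τ(k))/√τ) = exp(−(|k|/√β_t)/√τ + c₀(k)/τ^{1/4} + c₁(k))·τ^{−κθ/(2ξ²)}·c₂(k)·(1 + z₁(k)·τ^{1/4} + O(τ^{1/2})). -/

import Mathlib

open Filter Topology Asymptotics MeasureTheory

set_option linter.unusedVariables false

noncomputable section


/-- sign convention of the paper: 1 if `0 ≤ x`, -1 otherwise. -/
def sgn' (x : ℝ) : ℝ := if 0 ≤ x then 1 else -1

/-- principal-branch complex square root `d` of the Heston Riccati discriminant. -/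
def hestD (κ ρ ξ : ℝ) (w : ℂ) : ℂ :=
  (((κ : ℂ) - (ρ : ℂ) * (ξ : ℂ) * w) ^ 2 + w * (1 - w) * (ξ : ℂ) ^ 2) ^ ((1 : ℂ) / 2)

def hestGamma (κ ρ ξ : ℝ) (w : ℂ) : ℂ :=
  ((κ : ℂ) - (ρ : ℂ) * (ξ : ℂ) * w - hestD κ ρ ξ w) /
    ((κ : ℂ) - (ρ : ℂ) * (ξ : ℂ) * w + hestD κ ρ ξ w)

def hestB (κ ρ ξ : ℝ) (w : ℂ) (τ : ℝ) : ℂ :=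
  (((κ : ℂ) - (ρ : ℂ) * (ξ : ℂ) * w - hestD κ ρ ξ w) / (ξ : ℂ) ^ 2) *
    ((1 - Complex.exp (-(hestD κ ρ ξ w) * (τ : ℂ))) /
      (1 - hestGamma κ ρ ξ w * Complex.exp (-(hestD κ ρ ξ w) * (τ : ℂ))))

def hestA (κ θ ρ ξ : ℝ) (w : ℂ) (τ : ℝ) : ℂ :=
  ((κ * θ / ξ ^ 2 : ℝ) : ℂ) *
    (((κ : ℂ) - (ρ : ℂ) * (ξ : ℂ) * w - hestD κ ρ ξ w) * (τ : ℂ) -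
      2 * Complex.log ((1 - hestGamma κ ρ ξ w * Complex.exp (-(hestD κ ρ ξ w) * (τ : ℂ))) /
        (1 - hestGamma κ ρ ξ w)))

def betaT (κ ξ t : ℝ) : ℝ := ξ ^ 2 * (1 - Real.exp (-(κ * t))) / (4 * κ)

/-- explicit Heston forward log-mgf `G_τ(w)`. -/
def hestG (κ θ ξ v ρ t : ℝ) (w : ℂ) (τ : ℝ) : ℂ :=
  hestA κ θ ρ ξ w τ +
    hestB κ ρ ξ w τ * (v : ℂ) * ((Real.exp (-(κ * t)) : ℝ) : ℂ) /
      (1 - 2 * (betaT κ ξ t : ℂ) * hestB κ ρ ξ w τ) -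
    ((2 * κ * θ / ξ ^ 2 : ℝ) : ℂ) *
      Complex.log (1 - 2 * (betaT κ ξ t : ℂ) * hestB κ ρ ξ w τ)

/-- rescaled forward log-mgf, for complex argument. -/
def hestLambdaC (κ θ ξ v ρ t τ : ℝ) (z : ℂ) : ℂ :=
  ((Real.sqrt τ : ℝ) : ℂ) * hestG κ θ ξ v ρ t (z / ((Real.sqrt τ : ℝ) : ℂ)) τ

/-- rescaled forward log-mgf `Λ_τ(u) = √τ · G_τ(u/√τ)`. -/
def hestLambda (κ θ ξ v ρ t τ : ℝ) (u : ℝ) : ℂ :=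
  hestLambdaC κ θ ξ v ρ t τ (u : ℂ)

/-- `D_{t,τ}`: the maximal open interval containing `0` on which `Λ_τ` is real-valued. -/
def hestDom (κ θ ξ v ρ t τ : ℝ) : Set ℝ :=
  connectedComponentIn (interior {u : ℝ | (hestLambda κ θ ξ v ρ t τ u).im = 0}) 0



def B1hat (ρ ξ u : ℝ) : ℝ := u / 4 * (u ^ 2 * ρ * ξ - 2)
/-- the derivative of `B1hat` in `u`. -/
def B1hat' (ρ ξ u : ℝ) : ℝ := (3 * u ^ 2 * ρ * ξ - 2) / 4

def coefA0 (κ θ ξ v ρ t k : ℝ) : ℝ := sgn' k / Real.sqrt (betaT κ ξ t)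

def coefA1 (κ θ ξ v ρ t k : ℝ) : ℝ :=
  -(coefA0 κ θ ξ v ρ t k) * Real.sqrt v * Real.exp (-(κ * t) / 2) /
    (2 * Real.sqrt |k| * betaT κ ξ t ^ ((1 : ℝ) / 4))

def coefA2 (κ θ ξ v ρ t k : ℝ) : ℝ :=
  -(κ * θ) / (k * ξ ^ 2) - B1hat ρ ξ (coefA0 κ θ ξ v ρ t k) / coefA0 κ θ ξ v ρ t k

def coefA3 (κ θ ξ v ρ t k : ℝ) : ℝ :=
  (2 * betaT κ ξ t * coefA1 κ θ ξ v ρ t k ^ 3 / (ξ ^ 4 * v ^ 2)) *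
    (ξ ^ 2 * v * betaT κ ξ t * Real.exp (κ * t) *
        (|k| * ξ ^ 2 * Real.sqrt (betaT κ ξ t) * B1hat ρ ξ (coefA0 κ θ ξ v ρ t k) -
          k * ξ ^ 2 * B1hat' ρ ξ (coefA0 κ θ ξ v ρ t k) - κ * θ) +
      (2 * κ * θ * betaT κ ξ t * Real.exp (κ * t)) ^ 2 - ξ ^ 4 * v ^ 2 / 16)

def coefE0 (κ θ ξ v ρ t k : ℝ) : ℝ := -2 * coefA1 κ θ ξ v ρ t k / coefA0 κ θ ξ v ρ t k

def coefR (κ θ ξ v ρ t k : ℝ) : ℝ :=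
  coefA1 κ θ ξ v ρ t k ^ 2 / 2 - κ * θ / (|k| * ξ ^ 2 * Real.sqrt (betaT κ ξ t))

def coefE1 (κ θ ξ v ρ t k : ℝ) : ℝ := -2 * betaT κ ξ t * coefR κ θ ξ v ρ t k

def coefE2 (κ θ ξ v ρ t k : ℝ) : ℝ :=
  -2 * betaT κ ξ t *
    (coefA1 κ θ ξ v ρ t k * coefA2 κ θ ξ v ρ t k + coefA0 κ θ ξ v ρ t k * coefA3 κ θ ξ v ρ t k +
      coefA1 κ θ ξ v ρ t k * B1hat' ρ ξ (coefA0 κ θ ξ v ρ t k))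

def coefZeta (κ θ ξ v ρ t k : ℝ) : ℝ :=
  2 * Real.sqrt v * Real.exp (-(κ * t) / 2) / coefE0 κ θ ξ v ρ t k ^ ((3 : ℝ) / 2)

def coefPsi0 (κ θ ξ v ρ t k : ℝ) : ℝ :=
  (coefA0 κ θ ξ v ρ t k * v * Real.exp (-(κ * t)) / coefE0 κ θ ξ v ρ t k ^ 3) *
    (coefE0 κ θ ξ v ρ t k ^ 2 +
      coefA0 κ θ ξ v ρ t k * betaT κ ξ t *
        (3 * coefA1 κ θ ξ v ρ t k * coefE0 κ θ ξ v ρ t k -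
          2 * coefA0 κ θ ξ v ρ t k * coefE1 κ θ ξ v ρ t k))

def coefPsi1 (κ θ ξ v ρ t k : ℝ) : ℝ :=
  -4 * coefA0 κ θ ξ v ρ t k * v * betaT κ ξ t * Real.exp (-(κ * t)) / coefE0 κ θ ξ v ρ t k ^ 4

def coefPsi2 (κ θ ξ v ρ t k : ℝ) : ℝ :=
  (v * Real.exp (-(κ * t)) / (2 * coefE0 κ θ ξ v ρ t k ^ 4)) *
    (4 * coefA0 κ θ ξ v ρ t k * betaT κ ξ t *
        (3 * coefA0 κ θ ξ v ρ t k * coefE1 κ θ ξ v ρ t k -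
          4 * coefA1 κ θ ξ v ρ t k * coefE0 κ θ ξ v ρ t k) -
      5 * coefE0 κ θ ξ v ρ t k ^ 2)

def coefPsi3 (κ θ ξ v ρ t k : ℝ) : ℝ :=
  8 * v * betaT κ ξ t * Real.exp (-(κ * t)) / coefE0 κ θ ξ v ρ t k ^ 5

def coefPsi4 (κ θ ξ v ρ t k : ℝ) : ℝ :=
  (v * Real.exp (-(κ * t)) / (2 * coefE0 κ θ ξ v ρ t k ^ 3)) *
    ((coefE1 κ θ ξ v ρ t k ^ 2 - coefE0 κ θ ξ v ρ t k * coefE2 κ θ ξ v ρ t k) / betaT κ ξ t -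
      2 * coefA0 κ θ ξ v ρ t k * coefA1 κ θ ξ v ρ t k * coefE0 κ θ ξ v ρ t k *
        coefE1 κ θ ξ v ρ t k +
      2 * coefE0 κ θ ξ v ρ t k ^ 2 * coefR κ θ ξ v ρ t k)

def coefPhi2a (κ θ ξ v ρ t k : ℝ) : ℝ :=
  coefPsi2 κ θ ξ v ρ t k - coefPsi0 κ θ ξ v ρ t k ^ 2 / 2 -
    (4 * κ * θ * betaT κ ξ t / ξ ^ 2) * (2 * κ * θ + ξ ^ 2) / (coefE0 κ θ ξ v ρ t k ^ 2 * ξ ^ 2) -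
    (4 * κ * θ * betaT κ ξ t / ξ ^ 2) *
      (coefA0 κ θ ξ v ρ t k * coefPsi0 κ θ ξ v ρ t k / coefE0 κ θ ξ v ρ t k)

def coefPhi2b (κ θ ξ v ρ t k : ℝ) : ℝ :=
  coefPsi3 κ θ ξ v ρ t k - coefPsi0 κ θ ξ v ρ t k * coefPsi1 κ θ ξ v ρ t k -
    (4 * κ * θ * betaT κ ξ t / ξ ^ 2) *
      (coefA0 κ θ ξ v ρ t k * coefPsi1 κ θ ξ v ρ t k / coefE0 κ θ ξ v ρ t k)

def coefPhi2c (κ θ ξ v ρ t k : ℝ) : ℝ := -(coefPsi1 κ θ ξ v ρ t k ^ 2) / 2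

def coefC0 (κ θ ξ v ρ t k : ℝ) : ℝ := 2 * |coefA1 κ θ ξ v ρ t k * k|

def coefC1 (κ θ ξ v ρ t k : ℝ) : ℝ :=
  (v * Real.exp (-(κ * t)) / coefE0 κ θ ξ v ρ t k) *
      (coefA0 κ θ ξ v ρ t k * coefA1 κ θ ξ v ρ t k -
        coefE1 κ θ ξ v ρ t k / (2 * betaT κ ξ t * coefE0 κ θ ξ v ρ t k)) -
    coefA2 κ θ ξ v ρ t k * k

def coefC2 (κ θ ξ v ρ t k : ℝ) : ℝ := coefE0 κ θ ξ v ρ t k ^ (-(2 * κ * θ / ξ ^ 2))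

def coefZ1 (κ θ ξ v ρ t k : ℝ) : ℝ :=
  coefPsi4 κ θ ξ v ρ t k - coefA3 κ θ ξ v ρ t k * k -
    (2 * κ * θ / ξ ^ 2) * (coefE1 κ θ ξ v ρ t k / coefE0 κ θ ξ v ρ t k)

def coefP1 (κ θ ξ v ρ t k : ℝ) : ℝ :=
  coefE0 κ θ ξ v ρ t k + coefPhi2a κ θ ξ v ρ t k / coefZeta κ θ ξ v ρ t k ^ 2 +
    3 * coefPhi2b κ θ ξ v ρ t k / coefZeta κ θ ξ v ρ t k ^ 4 +
    15 * coefPhi2c κ θ ξ v ρ t k / coefZeta κ θ ξ v ρ t k ^ 6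

def phi1C (κ θ ξ v ρ t k u : ℝ) : ℂ :=
  Complex.I * (u : ℂ) *
      ((coefPsi0 κ θ ξ v ρ t k +
          4 * coefA0 κ θ ξ v ρ t k * κ * θ * betaT κ ξ t / (coefE0 κ θ ξ v ρ t k * ξ ^ 2) : ℝ) : ℂ) +
    Complex.I * (u : ℂ) ^ 3 * ((coefPsi1 κ θ ξ v ρ t k : ℝ) : ℂ)

def phi2R (κ θ ξ v ρ t k u : ℝ) : ℝ :=
  u ^ 2 * coefPhi2a κ θ ξ v ρ t k + u ^ 4 * coefPhi2b κ θ ξ v ρ t k +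
    u ^ 6 * coefPhi2c κ θ ξ v ρ t k



/-- `Ch q = cosh (√q)` as an entire function of `q`. -/
def hCh : ℝ → ℝ := FormalMultilinearSeries.ofScalarsSum (fun n : ℕ => (1 : ℝ) / ((2 * n).factorial : ℝ))
/-- `Sh q = sinh (√q)/√q` as an entire function of `q`. -/
def hSh : ℝ → ℝ := FormalMultilinearSeries.ofScalarsSum (fun n : ℕ => (1 : ℝ) / ((2 * n + 1).factorial : ℝ))

lemma ofScalars_contDiff (c : ℕ → ℝ) (hc : ∀ n, c n ≠ 0)
    (h : Tendsto (fun n => ‖c n.succ‖ / ‖c n‖) atTop (𝓝 0)) :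
    ContDiff ℝ 1 (FormalMultilinearSeries.ofScalarsSum c : ℝ → ℝ) := by
  have hr := FormalMultilinearSeries.ofScalars_radius_eq_top_of_tendsto ℝ
    (c := c) (Eventually.of_forall hc) h
  have h1 := (FormalMultilinearSeries.ofScalars ℝ c).hasFPowerSeriesOnBall (by rw [hr]; simp)
  rw [hr] at h1
  have h2 : AnalyticOnNhd ℝ (FormalMultilinearSeries.ofScalarsSum c : ℝ → ℝ) Set.univ := by
    intro x _
    exact h1.analyticAt_of_mem (by simp)
  exact contDiffOn_univ.1 h2.contDiffOn_of_completeSpace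

lemma ratio_aux : Tendsto (fun n : ℕ => (1 : ℝ) / ((n : ℝ) + 1)) atTop (𝓝 0) :=
  tendsto_one_div_add_atTop_nhds_zero_nat

lemma hCh_contDiff : ContDiff ℝ 1 hCh := by
  apply ofScalars_contDiff
  · intro n; positivity
  · refine squeeze_zero (fun n => by positivity) (fun n => ?_) ratio_aux
    have e : (2 * n.succ).factorial = (2 * n + 2) * ((2 * n + 1) * (2 * n).factorial) := by
      rw [show 2 * n.succ = (2 * n + 1) + 1 by omega, Nat.factorial_succ, Nat.factorial_succ]
    have hf : (0 : ℝ) < ((2 * n).factorial : ℝ) := by positivity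
    rw [e]
    push_cast
    rw [Real.norm_of_nonneg (by positivity), Real.norm_of_nonneg (by positivity)]
    rw [div_div_eq_mul_div, div_one, one_div_mul_eq_div, div_le_div_iff₀ (by positivity) (by positivity)]
    have hn : (0 : ℝ) ≤ n := by positivity
    nlinarith [mul_nonneg hn hf.le, mul_nonneg hn (mul_nonneg hn hf.le)]

lemma hSh_contDiff : ContDiff ℝ 1 hSh := by
  apply ofScalars_contDiff
  · intro n; positivity
  · refine squeeze_zero (fun n => by positivity) (fun n => ?_) ratio_aux
    have e : (2 * n.succ + 1).factorial = (2 * n + 3) * ((2 * n + 2) * (2 * n + 1).factorial) := by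
      rw [show 2 * n.succ + 1 = (2 * n + 2) + 1 by omega, Nat.factorial_succ, Nat.factorial_succ]
    have hf : (0 : ℝ) < ((2 * n + 1).factorial : ℝ) := by positivity
    rw [e]
    push_cast
    rw [Real.norm_of_nonneg (by positivity), Real.norm_of_nonneg (by positivity)]
    rw [div_div_eq_mul_div, div_one, one_div_mul_eq_div, div_le_div_iff₀ (by positivity) (by positivity)]
    have hn : (0 : ℝ) ≤ n := by positivity
    nlinarith [mul_nonneg hn hf.le, mul_nonneg hn (mul_nonneg hn hf.le)]

lemma hCh_zero : hCh 0 = 1 := by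
  simp [hCh, FormalMultilinearSeries.ofScalarsSum_zero]

lemma hSh_zero : hSh 0 = 1 := by
  simp [hSh, FormalMultilinearSeries.ofScalarsSum_zero]

lemma hCh_cosh (x : ℂ) (q : ℝ) (h : x ^ 2 = (q : ℂ)) : Complex.cosh x = ((hCh q : ℝ) : ℂ) := by
  rw [Complex.cosh_eq_tsum, hCh, FormalMultilinearSeries.ofScalars_sum_eq, Complex.ofReal_tsum]
  congr 1
  ext n
  rw [pow_mul, h]
  push_cast
  simp only [smul_eq_mul]
  push_cast
  ring

lemma hSh_sinh (x : ℂ) (q : ℝ) (h : x ^ 2 = (q : ℂ)) :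
    Complex.sinh x = x * ((hSh q : ℝ) : ℂ) := by
  rw [Complex.sinh_eq_tsum, hSh, FormalMultilinearSeries.ofScalars_sum_eq, Complex.ofReal_tsum,
    ← tsum_mul_left]
  congr 1
  ext n
  rw [pow_succ, pow_mul, h]
  simp only [smul_eq_mul]
  push_cast
  ring


def hQ (κ ξ ρ e u : ℝ) : ℝ :=
  (κ ^ 2 * e ^ 4 + (ξ ^ 2 - 2 * κ * ρ * ξ) * u * e ^ 3 - (1 - ρ ^ 2) * ξ ^ 2 * u ^ 2 * e ^ 2) / 4
def hP (κ ξ ρ e u : ℝ) : ℝ := (κ * e ^ 2 - ρ * ξ * u * e) / 2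
def hC (κ ξ ρ e u : ℝ) : ℝ := hCh (hQ κ ξ ρ e u) + hP κ ξ ρ e u * hSh (hQ κ ξ ρ e u)
def hBr (κ ξ ρ e u : ℝ) : ℝ := (u ^ 2 - u * e) / 2 * hSh (hQ κ ξ ρ e u) / hC κ ξ ρ e u
def hH (κ ξ ρ β e u : ℝ) : ℝ := 1 - 2 * β * hBr κ ξ ρ e u

lemma good_core (a d x w ξ N S C τ : ℂ) (hξ : ξ ≠ 0) (hd : d ≠ 0) (had : a + d ≠ 0) 
    (hx : x = d * τ / 2) (hC0 : C ≠ 0)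
    (hdd : d ^ 2 = a ^ 2 + w * (1 - w) * ξ ^ 2) (hN : N = w * (w - 1) * τ / 2)
    (hch : C = Complex.cosh x + a * τ / 2 * S) (hsh : Complex.sinh x = x * S) :
    ((1 - (a - d) / (a + d) * Complex.exp (-d * τ)) / (1 - (a - d) / (a + d)) = Complex.exp (-x) * C) ∧
    ((a - d) / ξ ^ 2 * ((1 - Complex.exp (-d * τ)) / (1 - (a - d) / (a + d) * Complex.exp (-d * τ)))
      = N * S / C) := by
  have e1 : Complex.exp (-d * τ) = Complex.exp (-x) * Complex.exp (-x) := by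
    rw [← Complex.exp_add]; congr 1; rw [hx]; ring
  have e2 : Complex.exp (-x) * Complex.exp x = 1 := by
    rw [← Complex.exp_add]; simp
  have e3 : Complex.exp x - Complex.exp (-x) = d * τ * S := by
    have : Complex.exp x - Complex.exp (-x) = 2 * Complex.sinh x := by rw [Complex.sinh]; ring
    rw [this, hsh, hx]; ring
  have e4 : 2 * d * C = d * (Complex.exp x + Complex.exp (-x)) + a * (Complex.exp x - Complex.exp (-x)) := by
    rw [hch, Complex.cosh, e3]; ring
  have hE : Complex.exp (-x) ≠ 0 := Complex.exp_ne_zero _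
  have hN2 : N * (2 * ξ ^ 2) = (a - d) * (a + d) * τ := by
    rw [hN]; linear_combination τ * hdd
  generalize Complex.exp (-x) = E at *
  generalize Complex.exp x = F at *
  have e5 : 1 - (a - d) / (a + d) * (E * E) = 2 * d * E * C / (a + d) := by
    rw [eq_div_iff had]
    have : (1 - (a - d) / (a + d) * (E * E)) * (a + d) = (a + d) - (a - d) * (E * E) := by
      field_simp
    rw [this]
    linear_combination (-E) * e4 - (d + a) * e2
  have e6 : 1 - (a - d) / (a + d) = 2 * d / (a + d) := by
    field_simp; ring
  have e7 : 1 - E * E = E * (d * τ * S) := by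
    linear_combination E * e3 - e2
  rw [e1, e5, e6, e7]
  constructor
  · field_simp
  · field_simp
    linear_combination (-S) * hN2

lemma hestLambda_good (κ θ ξ v ρ t τ u : ℝ) (hξ : 0 < ξ) (hτ : 0 < τ)
    (hd : κ ^ 2 + (ξ ^ 2 - 2 * κ * ρ * ξ) * (u / √τ) - (1 - ρ ^ 2) * ξ ^ 2 * (u / √τ) ^ 2 ≠ 0)
    (hw0 : u / √τ ≠ 0) (hw1 : u / √τ ≠ 1) (hq : |hQ κ ξ ρ (√τ) u| < 1)
    (hC0 : 0 < hC κ ξ ρ (√τ) u) :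
    hestLambda κ θ ξ v ρ t τ u = ((√τ : ℝ) : ℂ) *
      (((κ * θ / ξ ^ 2 * (2 * hP κ ξ ρ (√τ) u - 2 * Real.log (hC κ ξ ρ (√τ) u)) +
        hBr κ ξ ρ (√τ) u * v * Real.exp (-(κ * t)) / hH κ ξ ρ (betaT κ ξ t) (√τ) u : ℝ) : ℂ)
        - ((2 * κ * θ / ξ ^ 2 : ℝ) : ℂ) *
          Complex.log ((hH κ ξ ρ (betaT κ ξ t) (√τ) u : ℝ) : ℂ)) := by
  have he : 0 < √τ := Real.sqrt_pos.2 hτ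
  have hτe : τ = √τ ^ 2 := (Real.sq_sqrt hτ.le).symm
  generalize hee : √τ = e at *
  set w : ℝ := u / e with hw
  have hu : u = w * e := by rw [hw]; field_simp
  set D : ℂ := hestD κ ρ ξ (w : ℂ) with hD
  have hD2 : D ^ 2 = ((κ ^ 2 + (ξ ^ 2 - 2 * κ * ρ * ξ) * w - (1 - ρ ^ 2) * ξ ^ 2 * w ^ 2 : ℝ) : ℂ) := by
    have h2 : ∀ z : ℂ, (z ^ ((1 : ℂ) / 2)) ^ 2 = z := fun z => by
      have := Complex.cpow_nat_inv_pow z two_ne_zero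
      rwa [Nat.cast_two, ← one_div] at this
    rw [hD, hestD, h2]
    push_cast; ring
  have hDne : D ≠ 0 := by
    intro h
    rw [h] at hD2
    apply hd
    have := hD2.symm
    rw [zero_pow two_ne_zero] at this
    exact_mod_cast this
  set a : ℂ := (κ : ℂ) - (ρ : ℂ) * (ξ : ℂ) * (w : ℂ) with ha
  have hdd : D ^ 2 = a ^ 2 + w * (1 - w) * (ξ : ℂ) ^ 2 := by
    rw [hD2, ha]; push_cast; ring
  have had : a + D ≠ 0 := by
    intro h
    have h1 : (w : ℂ) * (1 - w) * (ξ : ℂ) ^ 2 = 0 := by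
      linear_combination (D - a) * h - hdd
    have h2 : w * (1 - w) * ξ ^ 2 = 0 := by exact_mod_cast h1
    have : w * (1 - w) * ξ ^ 2 ≠ 0 :=
      mul_ne_zero (mul_ne_zero hw0 (sub_ne_zero.2 (Ne.symm hw1))) (by positivity)
    exact this h2
  set x : ℂ := D * (τ : ℂ) / 2 with hx
  have hxq : x ^ 2 = ((hQ κ ξ ρ e u : ℝ) : ℂ) := by
    rw [hx, show (D * (τ : ℂ) / 2) ^ 2 = D ^ 2 * (τ : ℂ) ^ 2 / 4 by ring, hD2, hQ, hτe, hu]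
    push_cast; ring
  have hxim : |x.im| < 3 := by
    have h1 : ‖x‖ ^ 2 < 1 := by
      rw [← norm_pow, hxq, Complex.norm_real]; exact hq
    have h2 : |x.im| ≤ ‖x‖ := Complex.abs_im_le_norm x
    nlinarith [norm_nonneg x]
  have hch := hCh_cosh x _ hxq
  have hsh := hSh_sinh x _ hxq
  have hP : a * (τ : ℂ) / 2 = ((hP κ ξ ρ e u : ℝ) : ℂ) := by
    rw [hP, ha, hτe, hu]; push_cast; ring
  have hCc : ((hC κ ξ ρ e u : ℝ) : ℂ) = Complex.cosh x + a * τ / 2 * ((hSh (hQ κ ξ ρ e u) : ℝ) : ℂ) := by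
    rw [hch, hP, hC]; push_cast; ring
  have hCne : ((hC κ ξ ρ e u : ℝ) : ℂ) ≠ 0 := by exact_mod_cast hC0.ne'
  obtain ⟨k1, k2⟩ := good_core a D x w ξ (((u ^ 2 - u * e) / 2 : ℝ) : ℂ) _ _ τ
    (by exact_mod_cast hξ.ne') hDne had hx hCne hdd
    (by rw [hτe, hu]; push_cast; ring) hCc hsh
  have hB : hestB κ ρ ξ (w : ℂ) τ = ((hBr κ ξ ρ e u : ℝ) : ℂ) := by
    rw [hestB, hestGamma, ← hD, ← ha, k2, hBr]; push_cast; ring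
  have hA : hestA κ θ ρ ξ (w : ℂ) τ =
      ((κ * θ / ξ ^ 2 * (2 * _root_.hP κ ξ ρ e u - 2 * Real.log (hC κ ξ ρ e u)) : ℝ) : ℂ) := by
    rw [hestA, hestGamma, ← hD, ← ha, k1, mul_comm (Complex.exp (-x)),
      Complex.log_ofReal_mul hC0 (Complex.exp_ne_zero _), Complex.log_exp]
    · push_cast
      rw [← hP, hx]; ring
    · have := abs_lt.1 hxim
      have := Real.pi_gt_three
      simp only [Complex.neg_im]; linarith
    · have := abs_lt.1 hxim
      have := Real.pi_gt_three
      simp only [Complex.neg_im]; linarith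
  rw [hestLambda, hestLambdaC, hee, ← Complex.ofReal_div, ← hw, hestG, hA, hB]
  have hHc : (1 - 2 * (betaT κ ξ t : ℂ) * ((hBr κ ξ ρ e u : ℝ) : ℂ)) =
    ((hH κ ξ ρ (betaT κ ξ t) e u : ℝ) : ℂ) := by rw [hH]; push_cast; ring
  rw [hHc]
  push_cast
  ring


def hQu (κ ξ ρ e u : ℝ) : ℝ :=
  ((ξ ^ 2 - 2 * κ * ρ * ξ) * e ^ 3 - 2 * (1 - ρ ^ 2) * ξ ^ 2 * u * e ^ 2) / 4
def hPu (ξ ρ e : ℝ) : ℝ := -(ρ * ξ * e) / 2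
def hCu (κ ξ ρ e u : ℝ) : ℝ :=
  deriv hCh (hQ κ ξ ρ e u) * hQu κ ξ ρ e u +
    (hPu ξ ρ e * hSh (hQ κ ξ ρ e u) +
      hP κ ξ ρ e u * (deriv hSh (hQ κ ξ ρ e u) * hQu κ ξ ρ e u))
def hBu (κ ξ ρ e u : ℝ) : ℝ :=
  (((2 * u - e) / 2 * hSh (hQ κ ξ ρ e u) +
      (u ^ 2 - u * e) / 2 * (deriv hSh (hQ κ ξ ρ e u) * hQu κ ξ ρ e u)) * hC κ ξ ρ e u -
    (u ^ 2 - u * e) / 2 * hSh (hQ κ ξ ρ e u) * hCu κ ξ ρ e u) / hC κ ξ ρ e u ^ 2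

def hF (κ θ ξ v ρ t e u : ℝ) : ℝ :=
  κ * θ / ξ ^ 2 * (2 * hP κ ξ ρ e u - 2 * Real.log (hC κ ξ ρ e u)) +
    hBr κ ξ ρ e u * v * Real.exp (-(κ * t)) / hH κ ξ ρ (betaT κ ξ t) e u -
    2 * κ * θ / ξ ^ 2 * Real.log (hH κ ξ ρ (betaT κ ξ t) e u)
def hFu (κ θ ξ v ρ t e u : ℝ) : ℝ :=
  κ * θ / ξ ^ 2 * (2 * hPu ξ ρ e - 2 * (hCu κ ξ ρ e u / hC κ ξ ρ e u)) +
    v * Real.exp (-(κ * t)) * hBu κ ξ ρ e u / hH κ ξ ρ (betaT κ ξ t) e u ^ 2 -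
    2 * κ * θ / ξ ^ 2 * ((-2 * betaT κ ξ t * hBu κ ξ ρ e u) / hH κ ξ ρ (betaT κ ξ t) e u)

lemma hCh_hasDerivAt (q : ℝ) : HasDerivAt hCh (deriv hCh q) q :=
  (hCh_contDiff.differentiable (by norm_num)).differentiableAt.hasDerivAt
lemma hSh_hasDerivAt (q : ℝ) : HasDerivAt hSh (deriv hSh q) q :=
  (hSh_contDiff.differentiable (by norm_num)).differentiableAt.hasDerivAt

lemma hQ_hasDerivAt (κ ξ ρ e u : ℝ) : HasDerivAt (hQ κ ξ ρ e) (hQu κ ξ ρ e u) u := by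
  have h1 := ((((hasDerivAt_id u).const_mul (ξ ^ 2 - 2 * κ * ρ * ξ)).mul_const (e ^ 3)).const_add
    (κ ^ 2 * e ^ 4)).sub ((((hasDerivAt_id u).pow 2).const_mul ((1 - ρ ^ 2) * ξ ^ 2)).mul_const (e ^ 2))
  have h2 := h1.div_const 4
  refine (h2.congr_deriv ?_).congr_of_eventuallyEq (Eventually.of_forall fun x => ?_)
  · simp only [hQu, id]; push_cast; ring
  · simp [hQ]

lemma hP_hasDerivAt (κ ξ ρ e u : ℝ) : HasDerivAt (hP κ ξ ρ e) (hPu ξ ρ e) u := by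
  have h1 := ((((hasDerivAt_id u).const_mul (ρ * ξ)).mul_const e).const_sub
    (κ * e ^ 2)).div_const 2
  refine (h1.congr_deriv ?_).congr_of_eventuallyEq (Eventually.of_forall fun x => ?_)
  · simp [hPu]
  · simp [hP]

lemma hC_hasDerivAt (κ ξ ρ e u : ℝ) : HasDerivAt (hC κ ξ ρ e) (hCu κ ξ ρ e u) u := by
  have hq := hQ_hasDerivAt κ ξ ρ e u
  have h1 := (hCh_hasDerivAt (hQ κ ξ ρ e u)).comp u hq
  have h2 := (hSh_hasDerivAt (hQ κ ξ ρ e u)).comp u hq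
  exact h1.add ((hP_hasDerivAt κ ξ ρ e u).mul h2)

lemma hBr_hasDerivAt (κ ξ ρ e u : ℝ) (hC0 : hC κ ξ ρ e u ≠ 0) :
    HasDerivAt (hBr κ ξ ρ e) (hBu κ ξ ρ e u) u := by
  have hq := hQ_hasDerivAt κ ξ ρ e u
  have h2 := (hSh_hasDerivAt (hQ κ ξ ρ e u)).comp u hq
  have hN : HasDerivAt (fun u : ℝ => (u ^ 2 - u * e) / 2) ((2 * u - e) / 2) u := by
    have := (((hasDerivAt_id u).pow 2).sub ((hasDerivAt_id u).mul_const e)).div_const 2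
    refine (this.congr_deriv ?_).congr_of_eventuallyEq (Eventually.of_forall fun x => ?_)
    · simp
    · simp
  exact (hN.mul h2).div (hC_hasDerivAt κ ξ ρ e u) hC0

lemma hH_hasDerivAt (κ ξ ρ β e u : ℝ) (hC0 : hC κ ξ ρ e u ≠ 0) :
    HasDerivAt (hH κ ξ ρ β e) (-2 * β * hBu κ ξ ρ e u) u := by
  have := ((hBr_hasDerivAt κ ξ ρ e u hC0).const_mul (2 * β)).const_sub 1
  refine (this.congr_deriv ?_)
  ring

lemma hF_hasDerivAt (κ θ ξ v ρ t e u : ℝ) (hC0 : hC κ ξ ρ e u ≠ 0)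
    (hH0 : hH κ ξ ρ (betaT κ ξ t) e u ≠ 0) :
    HasDerivAt (hF κ θ ξ v ρ t e) (hFu κ θ ξ v ρ t e u) u := by
  have hb := hBr_hasDerivAt κ ξ ρ e u hC0
  have hh := hH_hasDerivAt κ ξ ρ (betaT κ ξ t) e u hC0
  have h1 := (((hP_hasDerivAt κ ξ ρ e u).const_mul 2).sub
    (((hC_hasDerivAt κ ξ ρ e u).log hC0).const_mul 2)).const_mul (κ * θ / ξ ^ 2)
  have h2 := ((hb.mul_const v).mul_const (Real.exp (-(κ * t)))).div hh hH0
  have h3 := (hh.log hH0).const_mul (2 * κ * θ / ξ ^ 2)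
  refine ((h1.add h2).sub h3).congr_deriv ?_
  rw [hFu]
  congr 2
  congr 1
  rw [hH]
  ring

lemma good_eventually (κ ξ ρ e u0 : ℝ) (hκ : 0 < κ) (he : 0 < e) :
    ∀ᶠ u in 𝓝[≠] u0, 
     (κ ^ 2 + (ξ ^ 2 - 2 * κ * ρ * ξ) * (u / e) - (1 - ρ ^ 2) * ξ ^ 2 * (u / e) ^ 2 ≠ 0) ∧
     u / e ≠ 0 ∧ u / e ≠ 1 := by
  have key : ∀ p : Polynomial ℝ, p ≠ 0 → ∀ᶠ u in 𝓝[≠] u0, p.eval u ≠ 0 := by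
    intro p hp
    have : ∀ᶠ u in cofinite, p.eval u ≠ 0 := by
      have hf : {x : ℝ | p.eval x = 0}.Finite := by
        refine (p.roots.toFinset.finite_toSet).subset ?_
        intro x hx
        simp only [Finset.mem_coe, Multiset.mem_toFinset]
        exact (Polynomial.mem_roots hp).2 hx
      rw [Filter.eventually_cofinite]
      simpa using hf
    exact nhdsNE_le_cofinite u0 this
  have h1 := key (Polynomial.C (κ ^ 2) + Polynomial.C ((ξ ^ 2 - 2 * κ * ρ * ξ) / e) * Polynomial.X
    - Polynomial.C ((1 - ρ ^ 2) * ξ ^ 2 / e ^ 2) * Polynomial.X ^ 2) (by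
      intro h
      have := congrArg (Polynomial.eval 0) h
      simp at this
      exact hκ.ne' this)
  have h2 := key Polynomial.X Polynomial.X_ne_zero
  have h3 := key (Polynomial.X - Polynomial.C e) (Polynomial.X_sub_C_ne_zero e)
  filter_upwards [h1, h2, h3] with u g1 g2 g3
  refine ⟨?_, ?_, ?_⟩
  · simp at g1
    intro h; apply g1; rw [← h]; field_simp
  · simp at g2
    exact div_ne_zero g2 he.ne'
  · simp at g3
    intro h
    rw [div_eq_one_iff_eq he.ne'] at h
    exact g3 (by rw [h]; ring)

/-- near a nice point, the closed formula holds off the point. -/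
lemma formula_eventually (κ θ ξ v ρ t τ u0 : ℝ) (hκ : 0 < κ) (hξ : 0 < ξ) (hτ : 0 < τ)
    (hq : |hQ κ ξ ρ (√τ) u0| < 1) (hC0 : 0 < hC κ ξ ρ (√τ) u0) :
    ∀ᶠ u in 𝓝[≠] u0, hestLambda κ θ ξ v ρ t τ u = ((√τ : ℝ) : ℂ) *
      (((κ * θ / ξ ^ 2 * (2 * hP κ ξ ρ (√τ) u - 2 * Real.log (hC κ ξ ρ (√τ) u)) +
        hBr κ ξ ρ (√τ) u * v * Real.exp (-(κ * t)) / hH κ ξ ρ (betaT κ ξ t) (√τ) u : ℝ) : ℂ)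
        - ((2 * κ * θ / ξ ^ 2 : ℝ) : ℂ) *
          Complex.log ((hH κ ξ ρ (betaT κ ξ t) (√τ) u : ℝ) : ℂ)) := by
  have c1 : ∀ᶠ u in 𝓝 u0, |hQ κ ξ ρ (√τ) u| < 1 :=
    (hQ_hasDerivAt κ ξ ρ (√τ) u0).continuousAt.abs.eventually (gt_mem_nhds hq)
  have c2 : ∀ᶠ u in 𝓝 u0, 0 < hC κ ξ ρ (√τ) u :=
    (hC_hasDerivAt κ ξ ρ (√τ) u0).continuousAt.eventually (lt_mem_nhds hC0)
  filter_upwards [good_eventually κ ξ ρ (√τ) u0 hκ (Real.sqrt_pos.2 hτ),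
    nhdsWithin_le_nhds c1, nhdsWithin_le_nhds c2] with u g1 g2 g3
  exact hestLambda_good κ θ ξ v ρ t τ u hξ hτ g1.1 g1.2.1 g1.2.2 g2 g3

lemma H_nonneg (κ θ ξ v ρ t τ u0 : ℝ) (hκ : 0 < κ) (hθ : 0 < θ) (hξ : 0 < ξ) (hτ : 0 < τ)
    (hq : |hQ κ ξ ρ (√τ) u0| < 1) (hC0 : 0 < hC κ ξ ρ (√τ) u0)
    (hu : u0 ∈ interior {u : ℝ | (hestLambda κ θ ξ v ρ t τ u).im = 0}) :
    ∀ᶠ u in 𝓝[≠] u0, 0 ≤ hH κ ξ ρ (betaT κ ξ t) (√τ) u := by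
  filter_upwards [formula_eventually κ θ ξ v ρ t τ u0 hκ hξ hτ hq hC0,
    nhdsWithin_le_nhds (mem_interior_iff_mem_nhds.1 hu)] with u g1 g2
  by_contra hneg
  push Not at hneg
  have g3 : (hestLambda κ θ ξ v ρ t τ u).im = 0 := g2
  rw [g1, Complex.im_ofReal_mul, Complex.sub_im, Complex.im_ofReal_mul, Complex.ofReal_im,
    Complex.log_im, Complex.arg_ofReal_of_neg hneg] at g3
  have : 0 < √τ * (2 * κ * θ / ξ ^ 2 * Real.pi) := by
    have := Real.sqrt_pos.2 hτ
    have := Real.pi_pos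
    positivity
  linarith

lemma H_nonneg_at (κ θ ξ v ρ t τ u0 : ℝ) (hκ : 0 < κ) (hθ : 0 < θ) (hξ : 0 < ξ) (hτ : 0 < τ)
    (hq : |hQ κ ξ ρ (√τ) u0| < 1) (hC0 : 0 < hC κ ξ ρ (√τ) u0)
    (hu : u0 ∈ interior {u : ℝ | (hestLambda κ θ ξ v ρ t τ u).im = 0}) :
    0 ≤ hH κ ξ ρ (betaT κ ξ t) (√τ) u0 := by
  have h1 := H_nonneg κ θ ξ v ρ t τ u0 hκ hθ hξ hτ hq hC0 hu
  have h2 := (hH_hasDerivAt κ ξ ρ (betaT κ ξ t) (√τ) u0 hC0.ne').continuousAt.tendsto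
  exact ge_of_tendsto (h2.mono_left nhdsWithin_le_nhds) h1

lemma crit_point (κ θ ξ v ρ t τ u0 k : ℝ) (hκ : 0 < κ) (hθ : 0 < θ) (hξ : 0 < ξ) (hτ : 0 < τ)
    (hk : k ≠ 0)
    (hq : |hQ κ ξ ρ (√τ) u0| < 1) (hC0 : 0 < hC κ ξ ρ (√τ) u0)
    (hu : u0 ∈ interior {u : ℝ | (hestLambda κ θ ξ v ρ t τ u).im = 0})
    (hd : deriv (hestLambda κ θ ξ v ρ t τ) u0 = (k : ℂ))
    (hnd : hH κ ξ ρ (betaT κ ξ t) (√τ) u0 = 0 → -2 * betaT κ ξ t * hBu κ ξ ρ (√τ) u0 ≠ 0) :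
    0 < hH κ ξ ρ (betaT κ ξ t) (√τ) u0 ∧
    hestLambda κ θ ξ v ρ t τ u0 = ((√τ * hF κ θ ξ v ρ t (√τ) u0 : ℝ) : ℂ) ∧
    √τ * hFu κ θ ξ v ρ t (√τ) u0 = k := by
  have h0 := H_nonneg κ θ ξ v ρ t τ u0 hκ hθ hξ hτ hq hC0 hu
  have h1 := H_nonneg_at κ θ ξ v ρ t τ u0 hκ hθ hξ hτ hq hC0 hu
  have hH' := hH_hasDerivAt κ ξ ρ (betaT κ ξ t) (√τ) u0 hC0.ne'
  have hpos : 0 < hH κ ξ ρ (betaT κ ξ t) (√τ) u0 := by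
    refine lt_of_le_of_ne h1 fun h => ?_
    refine hnd h.symm ?_
    have hmin : IsLocalMin (hH κ ξ ρ (betaT κ ξ t) (√τ)) u0 := by
      have := eventually_nhdsWithin_iff.1 h0
      filter_upwards [this] with u hu
      rw [← h]
      by_cases hh : u = u0
      · rw [hh]; exact h1
      · exact hu hh
    exact hmin.hasDerivAt_eq_zero hH'
  have hev : ∀ᶠ u in 𝓝 u0, 0 < hH κ ξ ρ (betaT κ ξ t) (√τ) u :=
    hH'.continuousAt.eventually (lt_mem_nhds hpos)
  have hform : ∀ᶠ u in 𝓝[≠] u0,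
      hestLambda κ θ ξ v ρ t τ u = ((√τ * hF κ θ ξ v ρ t (√τ) u : ℝ) : ℂ) := by
    filter_upwards [formula_eventually κ θ ξ v ρ t τ u0 hκ hξ hτ hq hC0,
      nhdsWithin_le_nhds hev] with u g1 g2
    rw [g1, ← Complex.ofReal_log g2.le, hF]
    push_cast; ring
  have hFd := (hF_hasDerivAt κ θ ξ v ρ t (√τ) u0 hC0.ne' hpos.ne').const_mul (√τ)
  have hFdc := hFd.ofReal_comp
  have hdiff : DifferentiableAt ℝ (hestLambda κ θ ξ v ρ t τ) u0 := by
    by_contra hn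
    rw [deriv_zero_of_not_differentiableAt hn] at hd
    exact hk (by exact_mod_cast hd.symm)
  have heq : hestLambda κ θ ξ v ρ t τ u0 = ((√τ * hF κ θ ξ v ρ t (√τ) u0 : ℝ) : ℂ) := by
    have t1 := hdiff.continuousAt.tendsto.mono_left (nhdsWithin_le_nhds (s := {u0}ᶜ))
    have t2 := hFdc.continuousAt.tendsto.mono_left (nhdsWithin_le_nhds (s := {u0}ᶜ))
    exact tendsto_nhds_unique t1 (t2.congr' (hform.mono fun u h => h.symm))
  refine ⟨hpos, heq, ?_⟩
  have hall : hestLambda κ θ ξ v ρ t τ =ᶠ[𝓝 u0]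
      fun u => ((√τ * hF κ θ ξ v ρ t (√τ) u : ℝ) : ℂ) := by
    filter_upwards [eventually_nhdsWithin_iff.1 hform] with u hu
    by_cases hh : u = u0
    · rw [hh]; exact heq
    · exact hu hh
  have := hall.deriv_eq
  rw [hd, hFdc.deriv] at this
  exact_mod_cast this.symm


/-- boundedness along a filter -/
def Bd (l : Filter ℝ) (f : ℝ → ℝ) : Prop := f =O[l] (fun _ => (1 : ℝ))

section BdLemmas
variable {l : Filter ℝ} {f g : ℝ → ℝ}
lemma Bd.const (c : ℝ) : Bd l (fun _ => c) := isBigO_const_const c one_ne_zero l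
lemma Bd.add (hf : Bd l f) (hg : Bd l g) : Bd l (fun x => f x + g x) := IsBigO.add hf hg
lemma Bd.sub (hf : Bd l f) (hg : Bd l g) : Bd l (fun x => f x - g x) := IsBigO.sub hf hg
lemma Bd.mul (hf : Bd l f) (hg : Bd l g) : Bd l (fun x => f x * g x) := by
  have := IsBigO.mul hf hg
  simpa [Bd] using this
lemma Bd.neg (hf : Bd l f) : Bd l (fun x => - f x) := IsBigO.neg_left hf
lemma Bd.pow (hf : Bd l f) (n : ℕ) : Bd l (fun x => f x ^ n) := by
  have := IsBigO.pow hf n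
  simpa [Bd] using this
lemma Bd.div_const (hf : Bd l f) (c : ℝ) : Bd l (fun x => f x / c) := by
  simp only [div_eq_mul_inv]; exact hf.mul (Bd.const _)
lemma Bd.of_tendsto {c : ℝ} (hf : Tendsto f l (𝓝 c)) : Bd l f := hf.isBigO_one ℝ
lemma Bd.tendsto_mul (hf : Tendsto f l (𝓝 0)) (hg : Bd l g) :
    Tendsto (fun x => f x * g x) l (𝓝 0) := by
  have h1 : f =o[l] (fun _ => (1 : ℝ)) := (isLittleO_one_iff ℝ).2 hf
  have h2 := h1.mul_isBigO hg
  simp only [mul_one] at h2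
  exact (isLittleO_one_iff ℝ).1 h2
end BdLemmas

lemma dslope_bd {l : Filter ℝ} {φ : ℝ → ℝ} {a : ℝ} (hφ : DifferentiableAt ℝ φ a) {q : ℝ → ℝ}
    (hq : Tendsto q l (𝓝 a)) : Bd l (fun x => dslope φ a (q x)) :=
  Bd.of_tendsto ((continuousAt_dslope_same.2 hφ).tendsto.comp hq)

lemma dslope_eq (φ : ℝ → ℝ) (a x : ℝ) : φ x = φ a + (x - a) * dslope φ a x := by
  have := sub_smul_dslope φ a x
  rw [smul_eq_mul] at this
  linarith

lemma expansion (κ ξ ρ : ℝ) (l : Filter ℝ) (e u : ℝ → ℝ) (he : Tendsto e l (𝓝 0)) (hu : Bd l u) :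
    Tendsto (fun x => hQ κ ξ ρ (e x) (u x)) l (𝓝 0) ∧
    Tendsto (fun x => hC κ ξ ρ (e x) (u x)) l (𝓝 1) ∧
    ∃ b c d f : ℝ → ℝ, Bd l b ∧ Bd l c ∧ Bd l d ∧ Bd l f ∧ ∀ᶠ x in l,
      hBr κ ξ ρ (e x) (u x) = u x ^ 2 / 2 + e x * B1hat ρ ξ (u x) + e x ^ 2 * b x ∧
      hBu κ ξ ρ (e x) (u x) = u x + e x * B1hat' ρ ξ (u x) + e x ^ 2 * c x ∧
      2 * hPu ξ ρ (e x) - 2 * (hCu κ ξ ρ (e x) (u x) / hC κ ξ ρ (e x) (u x)) = e x * d x ∧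
      2 * hP κ ξ ρ (e x) (u x) - 2 * Real.log (hC κ ξ ρ (e x) (u x)) = e x * f x := by
  have hbe : Bd l e := Bd.of_tendsto he
  obtain ⟨q1, hq1⟩ : ∃ q1 : ℝ → ℝ, q1 = fun x => (κ ^ 2 * e x ^ 2 + (ξ ^ 2 - 2 * κ * ρ * ξ) * (u x * e x)
    - (1 - ρ ^ 2) * ξ ^ 2 * u x ^ 2) / 4 := ⟨_, rfl⟩
  obtain ⟨q2, hq2⟩ : ∃ q2 : ℝ → ℝ, q2 = fun x => ((ξ ^ 2 - 2 * κ * ρ * ξ) * e x - 2 * (1 - ρ ^ 2) * ξ ^ 2 * u x) / 4 := ⟨_, rfl⟩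
  have bq1 : Bd l q1 := by
    rw [hq1]
    repeat' first | assumption | exact Bd.const _ | apply Bd.div_const | apply Bd.sub | apply Bd.neg | apply Bd.add | apply Bd.mul | apply Bd.pow
  have bq2 : Bd l q2 := by
    rw [hq2]
    repeat' first | assumption | exact Bd.const _ | apply Bd.div_const | apply Bd.sub | apply Bd.neg | apply Bd.add | apply Bd.mul | apply Bd.pow
  have eQ : ∀ x, hQ κ ξ ρ (e x) (u x) = e x ^ 2 * q1 x := by intro x; rw [hQ, hq1]; ring
  have eQu : ∀ x, hQu κ ξ ρ (e x) (u x) = e x ^ 2 * q2 x := by intro x; rw [hQu, hq2]; ring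
  have tQ : Tendsto (fun x => hQ κ ξ ρ (e x) (u x)) l (𝓝 0) := by
    simp only [eQ]
    refine Bd.tendsto_mul ?_ bq1
    simpa using he.pow 2
  obtain ⟨s1, hs1⟩ : ∃ s1 : ℝ → ℝ, s1 = fun x => q1 x * dslope hSh 0 (hQ κ ξ ρ (e x) (u x)) := ⟨_, rfl⟩
  obtain ⟨c1, hc1⟩ : ∃ c1 : ℝ → ℝ, c1 = fun x => q1 x * dslope hCh 0 (hQ κ ξ ρ (e x) (u x)) := ⟨_, rfl⟩
  have bs1 : Bd l s1 := by
    rw [hs1]; exact bq1.mul (dslope_bd (hSh_hasDerivAt 0).differentiableAt tQ)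
  have bc1 : Bd l c1 := by
    rw [hc1]; exact bq1.mul (dslope_bd (hCh_hasDerivAt 0).differentiableAt tQ)
  have eS : ∀ x, hSh (hQ κ ξ ρ (e x) (u x)) = 1 + e x ^ 2 * s1 x := by
    intro x
    rw [dslope_eq hSh 0 (hQ κ ξ ρ (e x) (u x)), hSh_zero, hs1]
    simp only
    rw [sub_zero]
    nth_rewrite 1 [eQ]
    ring
  have eCh : ∀ x, hCh (hQ κ ξ ρ (e x) (u x)) = 1 + e x ^ 2 * c1 x := by
    intro x
    rw [dslope_eq hCh 0 (hQ κ ξ ρ (e x) (u x)), hCh_zero, hc1]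
    simp only
    rw [sub_zero]
    nth_rewrite 1 [eQ]
    ring
  obtain ⟨s2, hs2⟩ : ∃ s2 : ℝ → ℝ, s2 = fun x => deriv hSh (hQ κ ξ ρ (e x) (u x)) := ⟨_, rfl⟩
  obtain ⟨c2, hc2⟩ : ∃ c2 : ℝ → ℝ, c2 = fun x => deriv hCh (hQ κ ξ ρ (e x) (u x)) := ⟨_, rfl⟩
  have bs2 : Bd l s2 := by
    rw [hs2]
    exact Bd.of_tendsto (((hSh_contDiff.continuous_deriv le_rfl).tendsto 0).comp tQ)
  have bc2 : Bd l c2 := by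
    rw [hc2]
    exact Bd.of_tendsto (((hCh_contDiff.continuous_deriv le_rfl).tendsto 0).comp tQ)
  have eP : ∀ x, hP κ ξ ρ (e x) (u x) = e x * ((κ * e x - ρ * ξ * u x) / 2) := by
    intro x; rw [hP]; ring
  obtain ⟨p1, hp1⟩ : ∃ p1 : ℝ → ℝ, p1 = fun x => (κ * e x - ρ * ξ * u x) / 2 := ⟨_, rfl⟩
  have bp1 : Bd l p1 := by
    rw [hp1]
    repeat' first | assumption | exact Bd.const _ | apply Bd.div_const | apply Bd.sub | apply Bd.neg | apply Bd.add | apply Bd.mul | apply Bd.pow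
  obtain ⟨c3, hc3⟩ : ∃ c3 : ℝ → ℝ, c3 = fun x => κ / 2 + c1 x + e x * p1 x * s1 x := ⟨_, rfl⟩
  have bc3 : Bd l c3 := by
    rw [hc3]
    repeat' first | assumption | exact Bd.const _ | apply Bd.div_const | apply Bd.sub | apply Bd.neg | apply Bd.add | apply Bd.mul | apply Bd.pow
  have eC : ∀ x, hC κ ξ ρ (e x) (u x) = 1 + e x * (-(ρ * ξ) * u x / 2 + e x * c3 x) := by
    intro x
    rw [hC, eS, eCh, eP, hc3, hp1]; ring
  have tC : Tendsto (fun x => hC κ ξ ρ (e x) (u x)) l (𝓝 1) := by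
    simp only [eC]
    have : Tendsto (fun x => e x * (-(ρ * ξ) * u x / 2 + e x * c3 x)) l (𝓝 0) := by
      apply Bd.tendsto_mul he
      repeat' first | assumption | exact Bd.const _ | apply Bd.div_const | apply Bd.sub | apply Bd.neg | apply Bd.add | apply Bd.mul | apply Bd.pow
    simpa using this.const_add 1
  obtain ⟨i, hi⟩ : ∃ i : ℝ → ℝ, i = fun x => (hC κ ξ ρ (e x) (u x))⁻¹ := ⟨_, rfl⟩
  have bi : Bd l i := by
    rw [hi]; exact Bd.of_tendsto (tC.inv₀ one_ne_zero)
  obtain ⟨c4, hc4⟩ : ∃ c4 : ℝ → ℝ, c4 = fun x => c2 x * q2 x - ρ * ξ * e x / 2 * s1 x + e x * p1 x * s2 x * q2 x := ⟨_, rfl⟩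
  have bc4 : Bd l c4 := by
    rw [hc4]
    repeat' first | assumption | exact Bd.const _ | apply Bd.div_const | apply Bd.sub | apply Bd.neg | apply Bd.add | apply Bd.mul | apply Bd.pow
  have eCu : ∀ x, hCu κ ξ ρ (e x) (u x) = e x * (-(ρ * ξ) / 2 + e x * c4 x) := by
    intro x
    rw [hCu, eS, eQu, eP, hPu, hc4, hp1, hs2, hc2]; ring
  refine ⟨tQ, tC, ?_⟩
  obtain ⟨b, hb⟩ : ∃ b : ℝ → ℝ, b = fun x => i x * (s1 x * (u x ^ 2 - u x * e x) / 2
    + ρ * ξ * u x / 2 * (u x / 4 * (u x ^ 2 * ρ * ξ - 2))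
    - c3 x * (u x ^ 2 / 2 + e x * (u x / 4 * (u x ^ 2 * ρ * ξ - 2)))) := ⟨_, rfl⟩
  have bb : Bd l b := by
    rw [hb]
    repeat' first | assumption | exact Bd.const _ | apply Bd.div_const | apply Bd.sub | apply Bd.neg | apply Bd.add | apply Bd.mul | apply Bd.pow
  refine ⟨b, fun x => i x * (s1 x * (u x - e x / 2) + (u x ^ 2 - u x * e x) / 2 * s2 x * q2 x
      + ρ * ξ / 2 * (u x / 4 * (u x ^ 2 * ρ * ξ - 2) + e x * b x)
      - c4 x * (u x ^ 2 / 2 + e x * (u x / 4 * (u x ^ 2 * ρ * ξ - 2)) + e x ^ 2 * b x)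
      + ρ * ξ * u x / 2 * ((3 * u x ^ 2 * ρ * ξ - 2) / 4)
      - c3 x * (u x + e x * ((3 * u x ^ 2 * ρ * ξ - 2) / 4))),
    fun x => -(ρ * ξ) - 2 * ((-(ρ * ξ) / 2 + e x * c4 x) * i x),
    fun x => 2 * p1 x - 2 * ((-(ρ * ξ) * u x / 2 + e x * c3 x) *
      dslope Real.log 1 (hC κ ξ ρ (e x) (u x))), bb, ?_, ?_, ?_, ?_⟩
  · repeat' first | assumption | exact Bd.const _ | apply Bd.div_const | apply Bd.sub | apply Bd.neg | apply Bd.add | apply Bd.mul | apply Bd.pow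
  · repeat' first | assumption | exact Bd.const _ | apply Bd.div_const | apply Bd.sub | apply Bd.neg | apply Bd.add | apply Bd.mul | apply Bd.pow
  · have : Bd l (fun x => dslope Real.log 1 (hC κ ξ ρ (e x) (u x))) :=
      dslope_bd (Real.differentiableAt_log one_ne_zero) tC
    repeat' first | assumption | exact Bd.const _ | apply Bd.div_const | apply Bd.sub | apply Bd.neg | apply Bd.add | apply Bd.mul | apply Bd.pow
  · have hne : ∀ᶠ x in l, hC κ ξ ρ (e x) (u x) ≠ 0 := tC.eventually_ne one_ne_zero
    filter_upwards [hne] with x hx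
    have hCi : hC κ ξ ρ (e x) (u x) * i x = 1 := by rw [hi]; exact mul_inv_cancel₀ hx
    have hbr : hBr κ ξ ρ (e x) (u x) = u x ^ 2 / 2 + e x * B1hat ρ ξ (u x) + e x ^ 2 * b x := by
      rw [hBr, div_eq_iff hx, eS, hb, B1hat]
      simp only
      rw [eC] at hCi ⊢
      linear_combination (- e x ^ 2 * (s1 x * (u x ^ 2 - u x * e x) / 2
    + ρ * ξ * u x / 2 * (u x / 4 * (u x ^ 2 * ρ * ξ - 2))
    - c3 x * (u x ^ 2 / 2 + e x * (u x / 4 * (u x ^ 2 * ρ * ξ - 2))))) * hCi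
    refine ⟨hbr, ?_, ?_, ?_⟩
    · have h1 : hBu κ ξ ρ (e x) (u x) = ((2 * u x - e x) / 2 * hSh (hQ κ ξ ρ (e x) (u x)) +
          (u x ^ 2 - u x * e x) / 2 * (deriv hSh (hQ κ ξ ρ (e x) (u x)) * hQu κ ξ ρ (e x) (u x))
          - hBr κ ξ ρ (e x) (u x) * hCu κ ξ ρ (e x) (u x)) / hC κ ξ ρ (e x) (u x) := by
        rw [hBu, hBr]; field_simp
      have h2 : deriv hSh (hQ κ ξ ρ (e x) (u x)) = s2 x := by rw [hs2]
      rw [h1, hbr, h2, eS, eQu, eCu, B1hat, B1hat', div_eq_iff hx]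
      rw [eC] at hCi ⊢
      linear_combination (- e x ^ 2 * (s1 x * (u x - e x / 2) + (u x ^ 2 - u x * e x) / 2 * s2 x * q2 x
      + ρ * ξ / 2 * (u x / 4 * (u x ^ 2 * ρ * ξ - 2) + e x * b x)
      - c4 x * (u x ^ 2 / 2 + e x * (u x / 4 * (u x ^ 2 * ρ * ξ - 2)) + e x ^ 2 * b x)
      + ρ * ξ * u x / 2 * ((3 * u x ^ 2 * ρ * ξ - 2) / 4)
      - c3 x * (u x + e x * ((3 * u x ^ 2 * ρ * ξ - 2) / 4)))) * hCi
    · rw [div_eq_mul_inv, eCu, hi, hPu]; ring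
    · rw [dslope_eq Real.log 1 (hC κ ξ ρ (e x) (u x)), Real.log_one, eP, hp1]
      simp only
      have : hC κ ξ ρ (e x) (u x) - 1 = e x * (-(ρ * ξ) * u x / 2 + e x * c3 x) := by rw [eC]; ring
      rw [this]; ring


lemma betaT_pos (κ ξ t : ℝ) (hκ : 0 < κ) (hξ : 0 < ξ) (ht : 0 < t) : 0 < betaT κ ξ t := by
  have : Real.exp (-(κ * t)) < 1 := Real.exp_lt_one_iff.2 (by nlinarith [mul_pos hκ ht])
  have : 0 < 1 - Real.exp (-(κ * t)) := by linarith
  rw [betaT]; positivity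

lemma sqrt_tendsto : Tendsto (fun τ : ℝ => √τ) (𝓝[>] 0) (𝓝 0) := by
  have := (Real.continuous_sqrt.tendsto 0).mono_left (nhdsWithin_le_nhds (s := Set.Ioi (0:ℝ)))
  simpa using this

lemma not_mem_interior (κ θ ξ v ρ t M : ℝ) (hκ : 0 < κ) (hθ : 0 < θ) (hξ : 0 < ξ)
    (ht : 0 < t) (hM : M ^ 2 = 4 / betaT κ ξ t) :
    ∀ᶠ τ in 𝓝[>] (0 : ℝ),
      M ∉ interior {u : ℝ | (hestLambda κ θ ξ v ρ t τ u).im = 0} := by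
  have hβ := betaT_pos κ ξ t hκ hξ ht
  obtain ⟨tQ, tC, b, c, d, f, bb, -, -, -, hev⟩ := expansion κ ξ ρ (𝓝[>] 0) (fun τ => √τ) (fun _ => M)
    sqrt_tendsto (Bd.const M)
  have hsm : Tendsto (fun τ => √τ * (B1hat ρ ξ M + √τ * b τ)) (𝓝[>] 0) (𝓝 0) := by
    apply Bd.tendsto_mul sqrt_tendsto
    exact (Bd.const _).add ((Bd.of_tendsto sqrt_tendsto).mul bb)
  have hsm' := hsm.const_mul (2 * betaT κ ξ t)
  rw [mul_zero] at hsm'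
  filter_upwards [hev, self_mem_nhdsWithin, hsm'.eventually (lt_mem_nhds (show (-1 : ℝ) < 0 by norm_num)),
    tQ.abs.eventually (gt_mem_nhds (show |(0 : ℝ)| < 1 by simp)),
    tC.eventually (lt_mem_nhds (show (0 : ℝ) < 1 by norm_num))] with τ h1 h2 h3 h4 h5 hmem
  have h6 := H_nonneg_at κ θ ξ v ρ t τ M hκ hθ hξ h2 h4 h5 hmem
  rw [hH, h1.1, hM] at h6
  have : betaT κ ξ t * (4 / betaT κ ξ t) = 4 := by field_simp
  nlinarith

lemma ustar_bound (κ θ ξ v ρ t : ℝ) (hκ : 0 < κ) (hθ : 0 < θ) (hξ : 0 < ξ)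
    (ht : 0 < t) (ustar : ℝ → ℝ)
    (hustar : ∀ᶠ τ in 𝓝[>] (0 : ℝ), ustar τ ∈ hestDom κ θ ξ v ρ t τ) :
    Bd (𝓝[>] 0) ustar := by
  have hβ := betaT_pos κ ξ t hκ hξ ht
  set M := √(4 / betaT κ ξ t) with hMdef
  have hM0 : 0 ≤ M := Real.sqrt_nonneg _
  have hM : M ^ 2 = 4 / betaT κ ξ t := Real.sq_sqrt (by positivity)
  refine IsBigO.of_bound M ?_
  filter_upwards [hustar, not_mem_interior κ θ ξ v ρ t M hκ hθ hξ ht hM,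
    not_mem_interior κ θ ξ v ρ t (-M) hκ hθ hξ ht (by rw [neg_sq]; exact hM)] with τ h1 h2 h3
  simp only [norm_one, mul_one, Real.norm_eq_abs]
  rw [hestDom] at h1
  have h0 := connectedComponentIn_nonempty_iff.1 ⟨_, h1⟩
  have h0' := mem_connectedComponentIn h0
  have hpre := isPreconnected_connectedComponentIn (F := interior {u : ℝ | (hestLambda κ θ ξ v ρ t τ u).im = 0}) (x := 0)
  rw [abs_le]
  constructor
  · by_contra hlt
    push Not at hlt
    exact h3 (connectedComponentIn_subset _ _ (hpre.Icc_subset h1 h0' ⟨hlt.le, by linarith⟩))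
  · by_contra hlt
    push Not at hlt
    exact h2 (connectedComponentIn_subset _ _ (hpre.Icc_subset h0' h1 ⟨hM0, hlt.le⟩))

/-- everything about the saddle point in real terms; `e = √τ`. -/
lemma saddle_eqs (κ θ ξ v ρ t : ℝ) (hκ : 0 < κ) (hθ : 0 < θ) (hξ : 0 < ξ)
    (ht : 0 < t) (k : ℝ) (hk : k ≠ 0) (ustar : ℝ → ℝ)
    (hustar : ∀ᶠ τ in 𝓝[>] (0 : ℝ), ustar τ ∈ hestDom κ θ ξ v ρ t τ ∧
      deriv (hestLambda κ θ ξ v ρ t τ) (ustar τ) = (k : ℂ)) :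
    Bd (𝓝[>] 0) ustar ∧
    ∃ b c d f h : ℝ → ℝ, Bd (𝓝[>] 0) b ∧ Bd (𝓝[>] 0) c ∧ Bd (𝓝[>] 0) d ∧ Bd (𝓝[>] 0) f ∧
      ∀ᶠ τ in 𝓝[>] (0 : ℝ), 0 < h τ ∧
        h τ = 1 - betaT κ ξ t * ustar τ ^ 2 - 2 * betaT κ ξ t * √τ * B1hat ρ ξ (ustar τ)
          + √τ ^ 2 * b τ ∧
        √τ * (√τ * d τ * h τ ^ 2 + (v * Real.exp (-(κ * t)) + 2 * κ * θ / ξ ^ 2 * (2 * betaT κ ξ t) * h τ)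
          * (ustar τ + √τ * B1hat' ρ ξ (ustar τ) + √τ ^ 2 * c τ)) = k * h τ ^ 2 ∧
        hestLambda κ θ ξ v ρ t τ (ustar τ) = ((√τ * (√τ * f τ +
          v * Real.exp (-(κ * t)) / (2 * betaT κ ξ t) * (1 / h τ - 1)
            - 2 * κ * θ / ξ ^ 2 * Real.log (h τ)) : ℝ) : ℂ) := by
  have hβ := betaT_pos κ ξ t hκ hξ ht
  have hu := ustar_bound κ θ ξ v ρ t hκ hθ hξ ht ustar (hustar.mono fun _ h => h.1)
  obtain ⟨tQ, tC, b, c, d, f, bb, bc, bd, bf, hev⟩ := expansion κ ξ ρ (𝓝[>] 0) (fun τ => √τ) ustar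
    sqrt_tendsto hu
  refine ⟨hu, fun τ => -(2 * betaT κ ξ t) * b τ, c, fun τ => κ * θ / ξ ^ 2 * d τ,
    fun τ => κ * θ / ξ ^ 2 * f τ, fun τ => hH κ ξ ρ (betaT κ ξ t) (√τ) (ustar τ),
    (Bd.const _).mul bb, bc, (Bd.const _).mul bd, (Bd.const _).mul bf, ?_⟩
  have hsm : Tendsto (fun τ => √τ * (2 * betaT κ ξ t * (ustar τ / 4 * (ustar τ ^ 2 * ρ * ξ - 2) + √τ * b τ)
      - betaT κ ξ t * ustar τ * ((3 * ustar τ ^ 2 * ρ * ξ - 2) / 4 + √τ * c τ))) (𝓝[>] 0) (𝓝 0) := by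
    have := Bd.of_tendsto sqrt_tendsto
    apply Bd.tendsto_mul sqrt_tendsto
    repeat' first | assumption | exact Bd.const _ | apply Bd.div_const | apply Bd.sub | apply Bd.neg | apply Bd.add | apply Bd.mul | apply Bd.pow
  filter_upwards [hustar, hev, self_mem_nhdsWithin,
    hsm.eventually (gt_mem_nhds (show (0 : ℝ) < 1 by norm_num)),
    tQ.abs.eventually (gt_mem_nhds (show |(0 : ℝ)| < 1 by simp)),
    tC.eventually (lt_mem_nhds (show (0 : ℝ) < 1 by norm_num))] with τ h0 h1 h2 h3 h4 h5
  obtain ⟨e1, e2, e3, e4⟩ := h1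
  have hτ : 0 < √τ := Real.sqrt_pos.2 h2
  obtain ⟨r1, r2, r3⟩ := crit_point κ θ ξ v ρ t τ (ustar τ) k hκ hθ hξ h2 hk h4 h5
    (connectedComponentIn_subset _ _ h0.1) h0.2 (by
      intro hz hz2
      have hz3 : hBu κ ξ ρ (√τ) (ustar τ) = 0 := by
        rcases mul_eq_zero.1 hz2 with h | h
        · exfalso; nlinarith
        · exact h
      rw [hH, e1, B1hat] at hz
      rw [e2, B1hat'] at hz3
      have : √τ * (2 * betaT κ ξ t * (ustar τ / 4 * (ustar τ ^ 2 * ρ * ξ - 2) + √τ * b τ)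
      - betaT κ ξ t * ustar τ * ((3 * ustar τ ^ 2 * ρ * ξ - 2) / 4 + √τ * c τ)) = 1 := by
        linear_combination -hz - betaT κ ξ t * ustar τ * hz3
      linarith)
  refine ⟨r1, ?_, ?_, ?_⟩
  · rw [hH, e1]; ring
  · rw [← r3, hFu, e2, e3]
    field_simp
    ring
  · rw [r2, hF, e4]
    congr 1
    have hB : hBr κ ξ ρ √τ (ustar τ) = (1 - hH κ ξ ρ (betaT κ ξ t) √τ (ustar τ)) / (2 * betaT κ ξ t) := by
      rw [hH]; field_simp; ring
    rw [hB]
    field_simp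


lemma Bd.of_inv {l : Filter ℝ} {f : ℝ → ℝ} {c : ℝ} (hf : Tendsto f l (𝓝 c)) (hc : c ≠ 0) :
    Bd l (fun x => (f x)⁻¹) := Bd.of_tendsto (hf.inv₀ hc)

set_option maxHeartbeats 1000000 in
/-- one-shot bootstrapping of the saddlepoint expansion. -/
lemma bootstrap {l : Filter ℝ} (β V m k ρ ξ a0 a1 a2 a3 e0 e1 e2 : ℝ) (s u η b c d : ℝ → ℝ)
    (hβ : 0 < β) (hk : k ≠ 0) (he0 : e0 ≠ 0) (ha0 : a0 ≠ 0)
    (hs : Tendsto s l (𝓝 0)) (hu : Tendsto u l (𝓝 a0)) (hη : Tendsto η l (𝓝 e0))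
    (bb : Bd l b) (bc : Bd l c) (bd : Bd l d)
    (E10 : 2 * β * V * a0 = k * e0 ^ 2)
    (E11 : 2 * β * (V * a1 + m * e0 * a0) = 2 * k * e0 * e1)
    (E12 : 2 * β * (V * (a2 + B1hat' ρ ξ a0) + m * (e0 * a1 + e1 * a0)) = k * (e1 ^ 2 + 2 * e0 * e2))
    (E20 : β * a0 ^ 2 = 1)
    (E21 : e0 = -2 * β * a0 * a1)
    (E22 : e1 = -β * (a1 ^ 2 + 2 * a0 * a2) - 2 * β * B1hat ρ ξ a0)
    (E23 : e2 = -β * (2 * a0 * a3 + 2 * a1 * a2) - 2 * β * B1hat' ρ ξ a0 * a1)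
    (h1 : ∀ᶠ x in l, s x ^ 4 * d x * η x ^ 2 + 2 * β * (V + m * s x * η x) *
      (u x + s x ^ 2 * B1hat' ρ ξ (u x) + s x ^ 4 * c x) = k * η x ^ 2)
    (h2 : ∀ᶠ x in l, s x * η x = 1 - β * u x ^ 2 - 2 * β * s x ^ 2 * B1hat ρ ξ (u x) + s x ^ 4 * b x) :
    ∃ U N : ℝ → ℝ, Bd l U ∧ Bd l N ∧ ∀ᶠ x in l,
      u x = a0 + a1 * s x + a2 * s x ^ 2 + a3 * s x ^ 3 + s x ^ 4 * U x ∧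
      η x = e0 + e1 * s x + e2 * s x ^ 2 + s x ^ 3 * N x := by
  have bs : Bd l s := Bd.of_tendsto hs
  have bu : Bd l u := Bd.of_tendsto hu
  have bη : Bd l η := Bd.of_tendsto hη
  have hcont : ∀ P : ℝ × ℝ × ℝ → ℝ, Continuous P →
      Tendsto (fun x => P (s x, u x, η x)) l (𝓝 (P (0, a0, e0))) := fun P hP =>
    (hP.tendsto (0, a0, e0)).comp (hs.prodMk_nhds (hu.prodMk_nhds hη))
  set X : ℝ → ℝ := fun x => k * (η x + (e0 + e1 * s x + e2 * s x ^ 2)) -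
    2 * β * m * s x * (u x + s x ^ 2 * ((3 * u x ^ 2 * ρ * ξ - 2) / 4)) with hX
  set Y : ℝ → ℝ := fun x => 2 * β * (V + m * s x * (e0 + e1 * s x + e2 * s x ^ 2)) *
    (1 + s x ^ 2 * (3 * ρ * ξ / 4) * (u x + (a0 + a1 * s x + a2 * s x ^ 2 + a3 * s x ^ 3))) with hY
  set Z : ℝ → ℝ := fun x => β * (u x + (a0 + a1 * s x + a2 * s x ^ 2 + a3 * s x ^ 3)) +
    2 * β * s x ^ 2 * (ρ * ξ / 4 * (u x ^ 2 + u x * (a0 + a1 * s x + a2 * s x ^ 2 + a3 * s x ^ 3) +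
      (a0 + a1 * s x + a2 * s x ^ 2 + a3 * s x ^ 3) ^ 2) - 1 / 2) with hZ
  have tX : Tendsto X l (𝓝 (2 * k * e0)) := by
    have := hcont (fun p => k * (p.2.2 + (e0 + e1 * p.1 + e2 * p.1 ^ 2)) -
      2 * β * m * p.1 * (p.2.1 + p.1 ^ 2 * ((3 * p.2.1 ^ 2 * ρ * ξ - 2) / 4))) (by fun_prop)
    convert this using 2; ring
  have tY : Tendsto Y l (𝓝 (2 * β * V)) := by
    have := hcont (fun p => 2 * β * (V + m * p.1 * (e0 + e1 * p.1 + e2 * p.1 ^ 2)) *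
      (1 + p.1 ^ 2 * (3 * ρ * ξ / 4) * (p.2.1 + (a0 + a1 * p.1 + a2 * p.1 ^ 2 + a3 * p.1 ^ 3))))
      (by fun_prop)
    convert this using 2; ring
  have tZ : Tendsto Z l (𝓝 (2 * β * a0)) := by
    have := hcont (fun p => β * (p.2.1 + (a0 + a1 * p.1 + a2 * p.1 ^ 2 + a3 * p.1 ^ 3)) +
    2 * β * p.1 ^ 2 * (ρ * ξ / 4 * (p.2.1 ^ 2 + p.2.1 * (a0 + a1 * p.1 + a2 * p.1 ^ 2 + a3 * p.1 ^ 3) +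
      (a0 + a1 * p.1 + a2 * p.1 ^ 2 + a3 * p.1 ^ 3) ^ 2) - 1 / 2)) (by fun_prop)
    convert this using 2; ring
  have bX := Bd.of_tendsto tX
  have bY := Bd.of_tendsto tY
  have bZ := Bd.of_tendsto tZ
  have tD : Tendsto (fun x => X x * Z x + s x * Y x) l (𝓝 (4 * k * β * e0 * a0)) := by
    have := (tX.mul tZ).add (hs.mul tY)
    convert this using 2; ring
  have hX0 : 2 * k * e0 ≠ 0 := by positivity
  have hD0 : 4 * k * β * e0 * a0 ≠ 0 := by positivity
  have bXi := Bd.of_inv tX hX0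
  have bDi := Bd.of_inv tD hD0
  -- residuals
  set R1 : ℝ → ℝ := fun x => s x * (d x * η x ^ 2 + 2 * β * (V + m * s x * η x) * c x)
    - k * (2 * e1 * e2 + e2 ^ 2 * s x)
    + 2 * β * (V * a3 + V * (3 * ρ * ξ / 4 * ((a1 + s x * (a2 + s x * a3)) * (2 * a0 + s x * (a1 + s x * (a2 + s x * a3)))))
      + m * (e2 * a0 + (e1 + s x * e2) * a1 + (e0 + s x * (e1 + s x * e2)) *
        ((a2 + s x * a3) + (3 * (a0 + s x * (a1 + s x * (a2 + s x * a3))) ^ 2 * ρ * ξ - 2) / 4))) with hR1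
  set R2 : ℝ → ℝ := fun x => b x - β * ((a2 + s x * a3) ^ 2 + 2 * a1 * a3)
    - 2 * β * ((3 * a0 ^ 2 * ρ * ξ - 2) / 4 * (a2 + s x * a3) + 3 * a0 * ρ * ξ / 4 * (a1 + s x * (a2 + s x * a3)) ^ 2
      + ρ * ξ / 4 * s x * (a1 + s x * (a2 + s x * a3)) ^ 3) with hR2
  have bR1 : Bd l R1 := by
    rw [hR1]
    repeat' first | assumption | exact Bd.const _ | apply Bd.div_const | apply Bd.sub | apply Bd.neg | apply Bd.add | apply Bd.mul | apply Bd.pow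
  have bR2 : Bd l R2 := by
    rw [hR2]
    repeat' first | assumption | exact Bd.const _ | apply Bd.div_const | apply Bd.sub | apply Bd.neg | apply Bd.add | apply Bd.mul | apply Bd.pow
  refine ⟨fun x => (X x * R2 x - R1 x) * (X x * Z x + s x * Y x)⁻¹,
    fun x => (s x * (Y x * ((X x * R2 x - R1 x) * (X x * Z x + s x * Y x)⁻¹)) + R1 x) * (X x)⁻¹, ?_, ?_, ?_⟩
  · exact ((bX.mul bR2).sub bR1).mul bDi
  · exact ((bs.mul (bY.mul (((bX.mul bR2).sub bR1).mul bDi))).add bR1).mul bXi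
  filter_upwards [h1, h2, tX.eventually_ne hX0, tD.eventually_ne hD0] with x h1 h2 x0 d0
  simp only [B1hat, B1hat'] at h1 h2 E12 E22 E23
  obtain ⟨δ, hδ⟩ : ∃ δ, u x = a0 + a1 * s x + a2 * s x ^ 2 + a3 * s x ^ 3 + δ := ⟨_, (add_sub_cancel _ _).symm⟩
  obtain ⟨ε, hε⟩ : ∃ ε, η x = e0 + e1 * s x + e2 * s x ^ 2 + ε := ⟨_, (add_sub_cancel _ _).symm⟩
  have G1 : X x * ε = Y x * δ + s x ^ 3 * R1 x := by
    simp only [hX, hY, hR1]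
    have hδ' : δ = u x - (a0 + a1 * s x + a2 * s x ^ 2 + a3 * s x ^ 3) := by linarith
    have hε' : ε = η x - (e0 + e1 * s x + e2 * s x ^ 2) := by linarith
    rw [hδ', hε']
    linear_combination -h1 + E10 + s x * E11 + s x ^ 2 * E12
  have G2 : Z x * δ = s x ^ 4 * R2 x - s x * ε := by
    simp only [hZ, hR2]
    have hδ' : δ = u x - (a0 + a1 * s x + a2 * s x ^ 2 + a3 * s x ^ 3) := by linarith
    have hε' : ε = η x - (e0 + e1 * s x + e2 * s x ^ 2) := by linarith
    rw [hδ', hε']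
    linear_combination h2 - E20 - s x * E21 - s x ^ 2 * E22 - s x ^ 3 * E23
  clear_value X Y Z R1 R2
  have G3 : (X x * Z x + s x * Y x) * δ = s x ^ 4 * (X x * R2 x - R1 x) := by
    linear_combination X x * G2 - s x * G1
  have G4 : δ = s x ^ 4 * ((X x * R2 x - R1 x) * (X x * Z x + s x * Y x)⁻¹) := by
    field_simp
    linear_combination G3
  have G5 : ε = s x ^ 3 * ((s x * (Y x * ((X x * R2 x - R1 x) * (X x * Z x + s x * Y x)⁻¹)) + R1 x) * (X x)⁻¹) := by
    have : ε * X x = s x ^ 3 * ((s x * (Y x * ((X x * R2 x - R1 x) * (X x * Z x + s x * Y x)⁻¹)) + R1 x)) := by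
      linear_combination G1 + Y x * G4
    rw [← mul_assoc, ← this, mul_assoc, mul_inv_cancel₀ x0, mul_one]
  exact ⟨by rw [hδ]; linear_combination G4, by rw [hε]; linear_combination G5⟩


lemma leading {l : Filter ℝ} (β V m k ρ ξ a0 e0 : ℝ) (s u η b c d : ℝ → ℝ)
    (hβ : 0 < β) (hV : 0 < V) (hk : k ≠ 0) (he0 : 0 < e0) (hak : 0 < a0 * k)
    (hs : Tendsto s l (𝓝 0)) (bu : Bd l u) (hηp : ∀ᶠ x in l, 0 < η x)
    (bb : Bd l b) (bc : Bd l c) (bd : Bd l d)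
    (E10 : 2 * β * V * a0 = k * e0 ^ 2)
    (E20 : β * a0 ^ 2 = 1)
    (h1 : ∀ᶠ x in l, s x ^ 4 * d x * η x ^ 2 + 2 * β * (V + m * s x * η x) *
      (u x + s x ^ 2 * B1hat' ρ ξ (u x) + s x ^ 4 * c x) = k * η x ^ 2)
    (h2 : ∀ᶠ x in l, s x * η x = 1 - β * u x ^ 2 - 2 * β * s x ^ 2 * B1hat ρ ξ (u x) + s x ^ 4 * b x) :
    Tendsto u l (𝓝 a0) ∧ Tendsto η l (𝓝 e0) := by
  have ha0 : a0 ≠ 0 := by rintro rfl; simp at hak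
  have bs : Bd l s := Bd.of_tendsto hs
  have bB : Bd l (fun x => B1hat ρ ξ (u x)) := by
    unfold B1hat
    repeat' first | assumption | exact Bd.const _ | apply Bd.div_const | apply Bd.sub | apply Bd.neg | apply Bd.add | apply Bd.mul | apply Bd.pow
  have bB' : Bd l (fun x => B1hat' ρ ξ (u x)) := by
    unfold B1hat'
    repeat' first | assumption | exact Bd.const _ | apply Bd.div_const | apply Bd.sub | apply Bd.neg | apply Bd.add | apply Bd.mul | apply Bd.pow
  have bh : Bd l (fun x => s x * η x) := by
    have : Bd l (fun x => 1 - β * u x ^ 2 - 2 * β * s x ^ 2 * B1hat ρ ξ (u x) + s x ^ 4 * b x) := by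
      repeat' first | assumption | exact Bd.const _ | apply Bd.div_const | apply Bd.sub | apply Bd.neg | apply Bd.add | apply Bd.mul | apply Bd.pow
    exact IsBigO.congr' this (h2.mono fun x hx => hx.symm) EventuallyEq.rfl
  have bη2 : Bd l (fun x => η x ^ 2) := by
    have : Bd l (fun x => (s x ^ 2 * d x * (s x * η x) ^ 2 + 2 * β * (V + m * (s x * η x)) *
      (u x + s x ^ 2 * B1hat' ρ ξ (u x) + s x ^ 4 * c x)) / k) := by
      repeat' first | assumption | exact Bd.const _ | apply Bd.div_const | apply Bd.sub | apply Bd.neg | apply Bd.add | apply Bd.mul | apply Bd.pow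
    refine IsBigO.congr' this (h1.mono fun x hx => ?_) EventuallyEq.rfl
    rw [div_eq_iff hk]; linear_combination hx
  have bη : Bd l η := by
    have h3 : Bd l (fun x => 1 + η x ^ 2) := (Bd.const 1).add bη2
    refine IsBigO.trans (IsBigO.of_norm_le fun x => ?_) h3
    rw [Real.norm_eq_abs]
    nlinarith [sq_nonneg (|η x| - 1), sq_abs (η x), abs_nonneg (η x)]
  have tu2 : Tendsto (fun x => u x ^ 2) l (𝓝 (a0 ^ 2)) := by
    have h4 : Tendsto (fun x => s x * ((-η x - 2 * β * s x * B1hat ρ ξ (u x) + s x ^ 3 * b x) / β)) l (𝓝 0) := by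
      apply Bd.tendsto_mul hs
      repeat' first | assumption | exact Bd.const _ | apply Bd.div_const | apply Bd.sub | apply Bd.neg | apply Bd.add | apply Bd.mul | apply Bd.pow
    have h5 := h4.add_const (a0 ^ 2)
    rw [zero_add] at h5
    refine h5.congr' (h2.mono fun x hx => ?_)
    field_simp
    linear_combination -hx + E20
  have tab : Tendsto (fun x => |u x|) l (𝓝 |a0|) := by
    have := tu2.sqrt
    simpa [Real.sqrt_sq_eq_abs] using this
  have t6 : Tendsto (fun x => k * η x ^ 2 - 2 * β * V * u x) l (𝓝 0) := by
    have h4 : Tendsto (fun x => s x * (s x ^ 3 * d x * η x ^ 2 + 2 * β * m * η x *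
      (u x + s x ^ 2 * B1hat' ρ ξ (u x) + s x ^ 4 * c x) + 2 * β * V * (s x * B1hat' ρ ξ (u x) + s x ^ 3 * c x))) l (𝓝 0) := by
      apply Bd.tendsto_mul hs
      repeat' first | assumption | exact Bd.const _ | apply Bd.div_const | apply Bd.sub | apply Bd.neg | apply Bd.add | apply Bd.mul | apply Bd.pow
    refine h4.congr' (h1.mono fun x hx => ?_)
    linear_combination hx
  have tu : Tendsto u l (𝓝 a0) := by
    have t7 := t6.const_mul a0
    rw [mul_zero] at t7
    have h8 : Tendsto (fun x => |a0| * |u x| / a0) l (𝓝 a0) := by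
      have := (tab.const_mul |a0|).div_const a0
      convert this using 2
      rw [abs_mul_abs_self]; field_simp
    have hp : 0 < |a0| := abs_pos.2 ha0
    refine h8.congr' ?_
    filter_upwards [t7.eventually (gt_mem_nhds (show (0:ℝ) < β * V * a0 ^ 2 by positivity)),
      tab.eventually (lt_mem_nhds (show |a0| / 2 < |a0| by linarith))] with x h9 h10
    have h11 : -(a0 ^ 2) / 2 < a0 * u x := by
      have : 0 ≤ a0 * k * η x ^ 2 := by positivity
      have h12 : 0 < (2 * β * V) * (a0 * u x + a0 ^ 2 / 2) := by nlinarith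
      have := pos_of_mul_pos_right h12 (by positivity)
      linarith
    have h13 : a0 ^ 2 / 2 < |a0 * u x| := by
      rw [abs_mul]; nlinarith [sq_abs a0]
    have h14 : 0 < a0 * u x := by
      by_contra hc
      rw [abs_of_nonpos (not_lt.1 hc)] at h13
      linarith
    rw [← abs_mul, abs_of_pos h14]; field_simp
  refine ⟨tu, ?_⟩
  have t9 : Tendsto (fun x => η x ^ 2) l (𝓝 (e0 ^ 2)) := by
    have := (t6.add (tu.const_mul (2 * β * V))).div_const k
    rw [zero_add, E10] at this
    convert this using 2
    · field_simp; ring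
    · field_simp
  have := t9.sqrt
  rw [Real.sqrt_sq he0.le] at this
  refine this.congr' (hηp.mono fun x hx => Real.sqrt_sq hx.le)

/-- final expansion of the exponent -/
lemma final_exp {l : Filter ℝ} (V m k a0 a1 a2 a3 e0 e1 e2 : ℝ) (s u η U N f : ℝ → ℝ)
    (he0 : 0 < e0) (hs : Tendsto s l (𝓝 0)) (hsp : ∀ᶠ x in l, 0 < s x)
    (hη : Tendsto η l (𝓝 e0)) (bU : Bd l U) (bN : Bd l N) (bf : Bd l f)
    (h : ∀ᶠ x in l,
      u x = a0 + a1 * s x + a2 * s x ^ 2 + a3 * s x ^ 3 + s x ^ 4 * U x ∧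
      η x = e0 + e1 * s x + e2 * s x ^ 2 + s x ^ 3 * N x) :
    ∃ W : ℝ → ℝ, Bd l W ∧ ∀ᶠ x in l,
      -k * u x / s x ^ 2 + s x ^ 2 * f x + V * (1 / (s x * η x) - 1) - m * Real.log (s x * η x) =
      -k * a0 / s x ^ 2 + (-k * a1 + V / e0) / s x + (-k * a2 - V * e1 / e0 ^ 2 - V)
        - m * Real.log (s x) - m * Real.log e0
        + (-k * a3 + V * (e1 ^ 2 - e0 * e2) / e0 ^ 3 - m * e1 / e0) * s x + s x ^ 2 * W x := by
  have bs : Bd l s := Bd.of_tendsto hs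
  have bη := Bd.of_tendsto hη
  have bηi := Bd.of_inv hη he0.ne'
  -- log remainder
  have hlog : ∃ L : ℝ → ℝ, Bd l L ∧ ∀ᶠ x in l, Real.log (η x) = Real.log e0 + e1 / e0 * s x + s x ^ 2 * L x := by
    refine ⟨fun x => (Real.log (η x) - Real.log e0 - e1 / e0 * s x) / s x ^ 2, ?_, ?_⟩
    · have hM : Bd l (fun x => |(e2 + s x * N x) / e0| + ((e1 + s x * e2 + s x ^ 2 * N x) / e0) ^ 2 * (e0 * (η x)⁻¹)) := by
        have h1 : Bd l (fun x => (e2 + s x * N x) / e0) := by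
          repeat' first | assumption | exact Bd.const _ | apply Bd.div_const | apply Bd.sub | apply Bd.neg | apply Bd.add | apply Bd.mul | apply Bd.pow
        have h2 : Bd l (fun x => |(e2 + s x * N x) / e0|) := IsBigO.abs_left h1
        repeat' first | assumption | exact Bd.const _ | apply Bd.div_const | apply Bd.sub | apply Bd.neg | apply Bd.add | apply Bd.mul | apply Bd.pow
      refine IsBigO.trans (IsBigO.of_bound 1 ?_) hM
      filter_upwards [h, hsp, hη.eventually (lt_mem_nhds he0)] with x hx hs0 hη0
      have hy : 0 < η x / e0 := by positivity
      have l1 := Real.log_le_sub_one_of_pos hy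
      have l2 := Real.one_sub_inv_le_log_of_pos hy
      rw [Real.log_div hη0.ne' he0.ne'] at l1 l2
      set y := η x / e0 with hyd
      have e1' : y - 1 = s x * ((e1 + s x * e2 + s x ^ 2 * N x) / e0) := by
        rw [hyd, hx.2]; field_simp; ring
      have e2' : y⁻¹ = e0 * (η x)⁻¹ := by rw [hyd, inv_div, div_eq_mul_inv]
      have e3' : y - 1 - e1 / e0 * s x = s x ^ 2 * ((e2 + s x * N x) / e0) := by
        rw [hyd, hx.2]; field_simp; ring
      have e4 : y - 1 - (1 - y⁻¹) = (y - 1) ^ 2 * y⁻¹ := by field_simp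
      rw [one_mul]
      refine le_trans ?_ (le_abs_self _)
      rw [Real.norm_eq_abs, abs_div, abs_of_pos (pow_pos hs0 2), div_le_iff₀ (pow_pos hs0 2), ← e2']
      have e5 : (y - 1) ^ 2 * y⁻¹ = ((e1 + s x * e2 + s x ^ 2 * N x) / e0) ^ 2 * y⁻¹ * s x ^ 2 := by
        rw [e1']; ring
      have e6 : 0 ≤ ((e1 + s x * e2 + s x ^ 2 * N x) / e0) ^ 2 * y⁻¹ * s x ^ 2 := by positivity
      have e7 := neg_abs_le ((e2 + s x * N x) / e0)
      have e8 := le_abs_self ((e2 + s x * N x) / e0)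
      have e9 : 0 < s x ^ 2 := by positivity
      rw [abs_le]
      constructor <;> nlinarith
    · filter_upwards [hsp] with x hx
      field_simp
      try ring
  obtain ⟨L, bL, hL⟩ := hlog
  refine ⟨fun x => -k * U x + f x + V * (-(e1 ^ 3 - 2 * e0 * e1 * e2 + s x * e2 * (e1 ^ 2 - e0 * e2) +
      N x * (e0 ^ 2 - e0 * e1 * s x + (e1 ^ 2 - e0 * e2) * s x ^ 2)) / e0 ^ 3 * (η x)⁻¹) - m * L x, ?_, ?_⟩
  · repeat' first | assumption | exact Bd.const _ | apply Bd.div_const | apply Bd.sub | apply Bd.neg | apply Bd.add | apply Bd.mul | apply Bd.pow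
  filter_upwards [h, hsp, hL, hη.eventually (lt_mem_nhds he0)] with x hx hs0 hl hη0
  rw [Real.log_mul hs0.ne' hη0.ne', hl, hx.1]
  set Q := -(e1 ^ 3 - 2 * e0 * e1 * e2 + s x * e2 * (e1 ^ 2 - e0 * e2) +
      N x * (e0 ^ 2 - e0 * e1 * s x + (e1 ^ 2 - e0 * e2) * s x ^ 2)) / e0 ^ 3 with hQ
  have hI : 1 = (1 / e0 - e1 / e0 ^ 2 * s x + (e1 ^ 2 - e0 * e2) / e0 ^ 3 * s x ^ 2) * η x + s x ^ 3 * Q := by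
    rw [hx.2, hQ]; field_simp; ring
  clear_value Q
  have hI2 : (η x)⁻¹ = (1 / e0 - e1 / e0 ^ 2 * s x + (e1 ^ 2 - e0 * e2) / e0 ^ 3 * s x ^ 2) + s x ^ 3 * (Q * (η x)⁻¹) := by
    have h3 := congrArg (fun z => z * (η x)⁻¹) hI
    simp only [one_mul, add_mul _ _ (η x)⁻¹] at h3
    rw [mul_assoc, mul_inv_cancel₀ hη0.ne', mul_one, mul_assoc] at h3
    exact h3
  set q := Q * (η x)⁻¹
  have hI3 : 1 / (s x * η x) = (1 / e0 - e1 / e0 ^ 2 * s x + (e1 ^ 2 - e0 * e2) / e0 ^ 3 * s x ^ 2 + s x ^ 3 * q) / s x := by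
    rw [← hI2]; field_simp
  rw [hI3]
  clear_value q
  field_simp
  ring


set_option maxHeartbeats 2000000 in
lemma alg_ids (b g E W K ξ ρ σ β V m k v a0 a1 a2 a3 e0 r e1 e2 ψ : ℝ)
    (hb : 0 < b) (hg : 0 < g) (hE : 0 < E) (hW : 0 < W) (hξ : 0 < ξ)
    (hσ : σ = 1 ∨ σ = -1) (hβ : β = b ^ 4) (hv : v = W ^ 2) (hk : k = σ * g ^ 2)
    (hV : V = v * E ^ 2 / (2 * β)) (hm : m = 2 * K / ξ ^ 2)
    (ha0 : a0 = σ / b ^ 2)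
    (ha1 : a1 = -a0 * W * E / (2 * g * b))
    (ha2 : a2 = -K / (k * ξ ^ 2) - B1hat ρ ξ a0 / a0)
    (ha3 : a3 = (2 * β * a1 ^ 3 / (ξ ^ 4 * v ^ 2)) *
      (ξ ^ 2 * v * β * (E ^ 2)⁻¹ * (g ^ 2 * ξ ^ 2 * b ^ 2 * B1hat ρ ξ a0 - k * ξ ^ 2 * B1hat' ρ ξ a0 - K) +
      (2 * K * β * (E ^ 2)⁻¹) ^ 2 - ξ ^ 4 * v ^ 2 / 16))
    (he0 : e0 = -2 * a1 / a0)
    (hr : r = a1 ^ 2 / 2 - K / (g ^ 2 * ξ ^ 2 * b ^ 2))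
    (he1 : e1 = -2 * β * r)
    (he2 : e2 = -2 * β * (a1 * a2 + a0 * a3 + a1 * B1hat' ρ ξ a0))
    (hψ : ψ = (v * E ^ 2 / (2 * e0 ^ 3)) * ((e1 ^ 2 - e0 * e2) / β - 2 * a0 * a1 * e0 * e1 + 2 * e0 ^ 2 * r)) :
    0 < e0 ∧ 0 < a0 * k ∧
    (2 * β * V * a0 = k * e0 ^ 2) ∧
    (2 * β * (V * a1 + m * e0 * a0) = 2 * k * e0 * e1) ∧
    (2 * β * (V * (a2 + B1hat' ρ ξ a0) + m * (e0 * a1 + e1 * a0)) = k * (e1 ^ 2 + 2 * e0 * e2)) ∧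
    (β * a0 ^ 2 = 1) ∧
    (e0 = -2 * β * a0 * a1) ∧
    (e1 = -β * (a1 ^ 2 + 2 * a0 * a2) - 2 * β * B1hat ρ ξ a0) ∧
    (e2 = -β * (2 * a0 * a3 + 2 * a1 * a2) - 2 * β * B1hat' ρ ξ a0 * a1) ∧
    (-k * a0 = -(g ^ 2 / b ^ 2)) ∧
    (-k * a1 + V / e0 = 2 * |a1 * k|) ∧
    (-k * a2 - V * e1 / e0 ^ 2 - V = (v * E ^ 2 / e0) * (a0 * a1 - e1 / (2 * β * e0)) - a2 * k) ∧
    (-k * a3 + V * (e1 ^ 2 - e0 * e2) / e0 ^ 3 - m * e1 / e0 = ψ - a3 * k - m * (e1 / e0)) := by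
  have ha1' : a1 = -σ * W * E / (2 * g * b ^ 3) := by rw [ha1, ha0]; field_simp
  have hσ0 : σ ≠ 0 := by rcases hσ with h | h <;> rw [h] <;> norm_num
  have hσ2 : σ ^ 2 = 1 := by rcases hσ with h | h <;> rw [h] <;> norm_num
  have he0' : e0 = W * E / (g * b) := by rw [he0, ha1, ha0]; field_simp
  have hak : a0 * k = g ^ 2 / b ^ 2 := by
    rw [ha0, hk]; field_simp; linear_combination hσ2
  have habs : |a1 * k| = g * W * E / (2 * b ^ 3) := by
    have : a1 * k = -(g * W * E / (2 * b ^ 3)) := by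
      rw [ha1', hk]; field_simp; linear_combination -hσ2
    rw [this, abs_neg, abs_of_pos (by positivity)]
  clear ha1 he0
  refine ⟨by rw [he0']; positivity, by rw [hak]; positivity, ?_, ?_, ?_, ?_, ?_, ?_, ?_, ?_, ?_, ?_, ?_⟩
  · rw [he0', hV, hβ, hv, ha0, hk]; field_simp
  · rw [he1, hr, hV, hβ, hv, hm, ha1', he0', ha0, hk]
    rcases hσ with rfl | rfl <;> · field_simp; ring
  · rw [he2, he1, ha3, ha2, hr, hV, hβ, hv, hm, ha1', he0', ha0, hk]
    simp only [B1hat, B1hat']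
    rcases hσ with rfl | rfl <;> · field_simp; ring
  · rw [ha0, hβ]; field_simp; linear_combination hσ2
  · rw [he0', hβ, ha0, ha1']
    rcases hσ with rfl | rfl <;> · field_simp
  · rw [he1, ha2, hr, hβ, ha1', ha0, hk]
    simp only [B1hat, B1hat']
    rcases hσ with rfl | rfl <;> · field_simp; ring
  · rw [he2]; ring
  · linear_combination -hak
  · rw [habs, hV, hβ, hv, he0', ha1', hk]
    rcases hσ with rfl | rfl <;> · field_simp; ring
  · rw [hV, hβ, hv, ha1', he0', ha0]
    rcases hσ with rfl | rfl <;> · field_simp; ring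
  · have hβ0 : β ≠ 0 := by rw [hβ]; positivity
    have h0 : e0 ≠ 0 := by rw [he0']; positivity
    have h1 : e0 * (a0 * a1) * e1 = e0 ^ 2 * r := by
      rw [he1, hβ, he0', ha0, ha1']
      rcases hσ with rfl | rfl <;> · field_simp
    rw [hψ, hV]
    field_simp
    linear_combination (2 * β * v * E ^ 2) * h1


lemma exp_rem {l : Filter ℝ} (z : ℝ) (s W : ℝ → ℝ) (hs : Tendsto s l (𝓝 0)) (bW : Bd l W) :
    (fun x => Real.exp (z * s x + s x ^ 2 * W x) - 1 - z * s x) =O[l] (fun x => s x ^ 2) := by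
  have bs := Bd.of_tendsto hs
  have t1 : Tendsto (fun x => s x * (z + s x * W x)) l (𝓝 0) :=
    Bd.tendsto_mul hs ((Bd.const _).add (bs.mul bW))
  have b2 : Bd l (fun x => (z + s x * W x) ^ 2 + |W x|) :=
    (((Bd.const _).add (bs.mul bW)).pow 2).add (IsBigO.abs_left bW)
  have h3 : (fun x => s x ^ 2 * ((z + s x * W x) ^ 2 + |W x|)) =O[l] (fun x => s x ^ 2) := by
    have := (isBigO_refl (fun x => s x ^ 2) l).mul b2
    simpa using this
  refine IsBigO.trans (IsBigO.of_bound 1 ?_) h3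
  filter_upwards [t1.abs.eventually (gt_mem_nhds (show |(0 : ℝ)| < 1 by simp))] with x hx
  have h4 := Real.abs_exp_sub_one_sub_id_le hx.le
  have h5 : z * s x + s x ^ 2 * W x = s x * (z + s x * W x) := by ring
  rw [one_mul, h5, Real.norm_eq_abs]
  refine le_trans ?_ (le_abs_self _)
  have h6 : Real.exp (s x * (z + s x * W x)) - 1 - z * s x =
    (Real.exp (s x * (z + s x * W x)) - 1 - s x * (z + s x * W x)) + s x ^ 2 * W x := by ring
  rw [h6]
  refine (abs_add_le _ _).trans ?_
  rw [abs_mul, abs_of_nonneg (sq_nonneg (s x))]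
  nlinarith

theorem stmt16 (κ θ ξ v ρ t : ℝ) (hκ : 0 < κ) (hθ : 0 < θ) (hξ : 0 < ξ)
    (hv : 0 < v) (hρ : ρ ∈ Set.Ioo (-1 : ℝ) 1) (ht : 0 < t)
    (k : ℝ) (hk : k ≠ 0) (ustar : ℝ → ℝ)
    (hustar : ∀ᶠ τ in 𝓝[>] (0 : ℝ), ustar τ ∈ hestDom κ θ ξ v ρ t τ ∧
      deriv (hestLambda κ θ ξ v ρ t τ) (ustar τ) = (k : ℂ)) :
    ∃ err : ℝ → ℂ, err =O[𝓝[>] (0 : ℝ)] (fun τ : ℝ => τ ^ ((1 : ℝ) / 2)) ∧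
      ∀ᶠ τ in 𝓝[>] (0 : ℝ),
        Complex.exp (((-(k * ustar τ) / Real.sqrt τ : ℝ) : ℂ) +
            hestLambda κ θ ξ v ρ t τ (ustar τ) / ((Real.sqrt τ : ℝ) : ℂ)) =
          Complex.exp (((-(|k| / Real.sqrt (betaT κ ξ t)) / Real.sqrt τ +
              coefC0 κ θ ξ v ρ t k / τ ^ ((1 : ℝ) / 4) + coefC1 κ θ ξ v ρ t k : ℝ) : ℂ)) *
            ((τ ^ (-(κ * θ / (2 * ξ ^ 2))) : ℝ) : ℂ) * ((coefC2 κ θ ξ v ρ t k : ℝ) : ℂ) *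
            (1 + ((coefZ1 κ θ ξ v ρ t k : ℝ) : ℂ) * ((τ ^ ((1 : ℝ) / 4) : ℝ) : ℂ) + err τ) := by
  have hβ := betaT_pos κ ξ t hκ hξ ht
  obtain ⟨bu, b, c, d, f, h, bb, bc, bd, bf, hev⟩ := saddle_eqs κ θ ξ v ρ t hκ hθ hξ ht k hk ustar hustar
  have hk' : 0 < |k| := abs_pos.2 hk
  -- parametrisation of the constants
  have hb4 : betaT κ ξ t = (betaT κ ξ t ^ ((1 : ℝ) / 4)) ^ 4 := by
    rw [← Real.rpow_natCast, ← Real.rpow_mul hβ.le]; norm_num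
  have hb2 : √(betaT κ ξ t) = (betaT κ ξ t ^ ((1 : ℝ) / 4)) ^ 2 := by
    rw [Real.sqrt_eq_rpow, ← Real.rpow_natCast, ← Real.rpow_mul hβ.le]; norm_num
  have hE2 : Real.exp (-(κ * t)) = Real.exp (-(κ * t) / 2) ^ 2 := by
    rw [← Real.exp_nat_mul]; congr 1; push_cast; ring
  have hE3 : Real.exp (κ * t) = (Real.exp (-(κ * t) / 2) ^ 2)⁻¹ := by
    rw [← hE2, Real.exp_neg, inv_inv]
  have hg2 : |k| = √|k| ^ 2 := (Real.sq_sqrt hk'.le).symm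
  have hσk : k = sgn' k * √|k| ^ 2 := by
    rw [← hg2, sgn']; split_ifs with h0
    · rw [abs_of_nonneg h0, one_mul]
    · rw [abs_of_neg (not_le.1 h0)]; ring
  obtain ⟨pe0, pak, E10, E11, E12, E20, E21, E22, E23, F0, F1, F2, F3⟩ :=
    alg_ids (betaT κ ξ t ^ ((1 : ℝ) / 4)) (√|k|) (Real.exp (-(κ * t) / 2)) (√v) (κ * θ) ξ ρ (sgn' k)
      (betaT κ ξ t) (v * Real.exp (-(κ * t)) / (2 * betaT κ ξ t)) (2 * κ * θ / ξ ^ 2) k v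
      (coefA0 κ θ ξ v ρ t k) (coefA1 κ θ ξ v ρ t k) (coefA2 κ θ ξ v ρ t k) (coefA3 κ θ ξ v ρ t k)
      (coefE0 κ θ ξ v ρ t k) (coefR κ θ ξ v ρ t k) (coefE1 κ θ ξ v ρ t k) (coefE2 κ θ ξ v ρ t k)
      (coefPsi4 κ θ ξ v ρ t k)
      (Real.rpow_pos_of_pos hβ _) (Real.sqrt_pos.2 hk') (Real.exp_pos _) (Real.sqrt_pos.2 hv) hξ
      (by rw [sgn']; split_ifs <;> simp) hb4 (Real.sq_sqrt hv.le).symm hσk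
      (by rw [hE2]) (by ring) (by rw [coefA0, hb2]) rfl (by rw [coefA2])
      (by rw [coefA3, hb2, hE3, ← hg2]; ring) rfl (by rw [coefR, hb2, ← hg2]) rfl rfl
      (by rw [coefPsi4, hE2])
  rw [← hg2, ← hb2] at F0
  rw [← hE2] at F2
  rw [show 2 * |coefA1 κ θ ξ v ρ t k * k| = coefC0 κ θ ξ v ρ t k from rfl] at F1
  rw [← coefC1] at F2
  rw [← coefZ1] at F3
  -- the small parameter
  set l := 𝓝[>] (0 : ℝ) with hl
  set s : ℝ → ℝ := fun τ => τ ^ ((1 : ℝ) / 4) with hsdef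
  have hs : Tendsto s l (𝓝 0) := by
    have : ContinuousAt (fun τ : ℝ => τ ^ ((1 : ℝ) / 4)) 0 :=
      Real.continuousAt_rpow_const _ _ (Or.inr (by norm_num))
    have h2 := this.tendsto.mono_left (nhdsWithin_le_nhds (s := Set.Ioi (0:ℝ)))
    rw [Real.zero_rpow (by norm_num)] at h2
    exact h2
  have hpos : ∀ᶠ τ in l, 0 < τ := self_mem_nhdsWithin
  have hsp : ∀ᶠ τ in l, 0 < s τ := hpos.mono fun τ hτ => Real.rpow_pos_of_pos hτ _
  have hs2 : ∀ᶠ τ in l, √τ = s τ ^ 2 := hpos.mono fun τ hτ => by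
    rw [Real.sqrt_eq_rpow, ← Real.rpow_natCast, ← Real.rpow_mul (le_of_lt hτ)]; norm_num
  have hs2' : ∀ᶠ τ in l, s τ ^ 2 = τ ^ ((1 : ℝ) / 2) := hs2.mono fun τ hτ => by
    rw [← hτ, Real.sqrt_eq_rpow]
  set V := v * Real.exp (-(κ * t)) / (2 * betaT κ ξ t) with hVdef
  have hV : 0 < V := by positivity
  set m := 2 * κ * θ / ξ ^ 2 with hm
  set η : ℝ → ℝ := fun τ => h τ / s τ with hηdef
  have hηp : ∀ᶠ τ in l, 0 < η τ := by
    filter_upwards [hev, hsp] with τ h1 h2 using div_pos h1.1 h2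
  have hsη : ∀ᶠ τ in l, h τ = s τ * η τ := by
    filter_upwards [hsp] with τ h2
    simp only [hηdef]; field_simp
  have hvV : v * Real.exp (-(κ * t)) = V * (2 * betaT κ ξ t) := by rw [hVdef]; field_simp
  have h1 : ∀ᶠ x in l, s x ^ 4 * d x * η x ^ 2 + 2 * betaT κ ξ t * (V + m * s x * η x) *
      (ustar x + s x ^ 2 * B1hat' ρ ξ (ustar x) + s x ^ 4 * c x) = k * η x ^ 2 := by
    filter_upwards [hev, hsp, hs2, hsη] with τ g1 g2 g3 g4
    have g5 := g1.2.2.1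
    rw [g3, g4, hvV] at g5
    have g6 : s τ ^ 2 ≠ 0 := by positivity
    apply mul_left_cancel₀ g6
    linear_combination g5
  have h2 : ∀ᶠ x in l, s x * η x = 1 - betaT κ ξ t * ustar x ^ 2 -
      2 * betaT κ ξ t * s x ^ 2 * B1hat ρ ξ (ustar x) + s x ^ 4 * b x := by
    filter_upwards [hev, hsp, hs2, hsη] with τ g1 g2 g3 g4
    have g5 := g1.2.1
    rw [g3, g4] at g5
    linear_combination g5
  have ha0 : coefA0 κ θ ξ v ρ t k ≠ 0 := by
    intro h0; rw [h0] at pak; simp at pak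
  obtain ⟨tu, tη⟩ := leading (betaT κ ξ t) V m k ρ ξ _ _ s ustar η b c d hβ hV hk pe0 pak hs bu hηp
    bb bc bd E10 E20 h1 h2
  obtain ⟨U, N, bU, bN, hUN⟩ := bootstrap (betaT κ ξ t) V m k ρ ξ _ _ _ _ _ _ _ s ustar η b c d hβ hk
    pe0.ne' ha0 hs tu tη bb bc bd E10 E11 E12 E20 E21 E22 E23 h1 h2
  obtain ⟨W, bW, hW⟩ := final_exp V m k _ _ _ _ _ _ _ s ustar η U N f pe0 hs hsp tη bU bN bf hUN
  refine ⟨fun τ => ((Real.exp (coefZ1 κ θ ξ v ρ t k * s τ + s τ ^ 2 * W τ) - 1 -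
    coefZ1 κ θ ξ v ρ t k * s τ : ℝ) : ℂ), ?_, ?_⟩
  · have := exp_rem (coefZ1 κ θ ξ v ρ t k) s W hs bW
    have h3 := this.congr' EventuallyEq.rfl hs2'
    refine IsBigO.trans (IsBigO.of_bound 1 (Eventually.of_forall fun τ => ?_)) h3
    rw [one_mul, Complex.norm_real]
  · filter_upwards [hev, hsp, hs2, hsη, hW, hpos, hηp] with τ g1 g2 g3 g4 g5 g6 g7
    rw [F0, F1, F2, F3] at g5
    have hlam := g1.2.2.2
    rw [g4] at hlam
    have k1 : ((-(k * ustar τ) / √τ : ℝ) : ℂ) + hestLambda κ θ ξ v ρ t τ (ustar τ) / ((√τ : ℝ) : ℂ) =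
        ((-(|k| / √(betaT κ ξ t)) / √τ + coefC0 κ θ ξ v ρ t k / s τ + coefC1 κ θ ξ v ρ t k
          - m * Real.log (s τ) - m * Real.log (coefE0 κ θ ξ v ρ t k) +
          (coefZ1 κ θ ξ v ρ t k * s τ + s τ ^ 2 * W τ) : ℝ) : ℂ) := by
      rw [hlam, ← Complex.ofReal_div, ← Complex.ofReal_add]
      congr 1
      rw [g3]
      have g8 : s τ ^ 2 * (s τ ^ 2 * f τ + V * (1 / (s τ * η τ) - 1) - m * Real.log (s τ * η τ)) / s τ ^ 2
        = s τ ^ 2 * f τ + V * (1 / (s τ * η τ) - 1) - m * Real.log (s τ * η τ) := by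
        field_simp
      rw [g8]
      linear_combination g5
    rw [k1, ← Complex.ofReal_exp, ← Complex.ofReal_exp]
    have k2 : τ ^ (-(κ * θ / (2 * ξ ^ 2))) = Real.exp (-(m * Real.log (s τ))) := by
      rw [Real.rpow_def_of_pos g6]
      simp only [hsdef]
      rw [Real.log_rpow g6, hm]
      congr 1; field_simp; ring
    have k3 : coefC2 κ θ ξ v ρ t k = Real.exp (-(m * Real.log (coefE0 κ θ ξ v ρ t k))) := by
      rw [coefC2, Real.rpow_def_of_pos pe0]
      congr 1; rw [hm]; ring
    rw [k2, k3]
    norm_cast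
    rw [show ∀ x y : ℝ, 1 + x + (y - 1 - x) = y from fun x y => by ring, ← Real.exp_add, ← Real.exp_add,
      ← Real.exp_add]
    congr 1

end
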